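/- arXiv:2404.09175 — 2 statements merged into one kernel-verified Lean document; each statement's English description precedes it below -/
import Mathlib

section
/- If β ∈ 𝔽_q((1/z)) has positive degree and is algebraic over 𝔽_q(z), then for every x ∈ 𝔽_q[[1/z]] that is algebraic over 𝔽_q(z), the β-expansion d_β(x) is p-automatic. -/
/-!
`β`-expansions of formal Laurent series.  The field `𝔽_q((1/z))` is modelled as
the field of Laurent series `LaurentSeries F = HahnSeries ℤ F` over a finite
field `F` of cardinality `q`, with variable `X = 1/z`; then `deg x = -x.order`,
the subring `𝔽_q[[1/z]]` is `{x | 0 ≤ x.order}`, and `𝔽_q(z) = 𝔽_q(1/z)` is the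
field `RatFunc F` of rational functions.
-/

/-- A sequence `b : ℕ → α` is `k`-automatic if its `k`-kernel
`{ (b (n k^i + j))_n : i ≥ 0, 0 ≤ j < k^i }` is finite. -/
def IsKAutomatic {α : Type*} (k : ℕ) (b : ℕ → α) : Prop :=
  {c : ℕ → α | ∃ i j : ℕ, j < k ^ i ∧ c = fun n => b (n * k ^ i + j)}.Finite

/-- The integer part `[x]` of a Laurent series in `𝔽_q((1/z))`: the sum of the
terms involving nonnegative powers of `z` (i.e. nonpositive powers of the
variable `X = 1/z`); it corresponds to a polynomial in `z`. -/
noncomputable def intPart {F : Type*} [Field F] (x : LaurentSeries F) : LaurentSeries F where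
  coeff n := if n ≤ 0 then x.coeff n else 0
  isPWO_support' := x.isPWO_support'.mono (by
    intro n hn
    simp only [Function.mem_support, ne_eq] at hn ⊢
    intro h
    apply hn
    simp [h])

/-- The `β`-transformation `T(x) = βx - [βx]` on `𝔽_q[[1/z]]`. -/
noncomputable def betaT {F : Type*} [Field F] (β : LaurentSeries F) (x : LaurentSeries F) :
    LaurentSeries F :=
  β * x - intPart (β * x)

/-- The digit sequence `d_β(x) = {a_n}_{n ≥ 1}` of the `β`-expansion of `x`
(reindexed from `0`):  `betaDigits β x n = a_{n+1} = [β ⬝ Tⁿ(x)]`. -/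
noncomputable def betaDigits {F : Type*} [Field F] (β x : LaurentSeries F) :
    ℕ → LaurentSeries F :=
  fun n => intPart (β * (betaT β)^[n] x)

open scoped RatFunc
open PowerSeries in
theorem ps_coeff_pow_char {F : Type*} [Field F] (p : ℕ) [Fact p.Prime] [CharP F p]
    (f : PowerSeries F) (n : ℕ) :
    (PowerSeries.coeff n) (f ^ p) = if p ∣ n then (PowerSeries.coeff (n / p) f) ^ p else 0 := by
  have hp : p.Prime := Fact.out
  have : CharP (PowerSeries F) p := charP_of_injective_algebraMap (R := F) (A := PowerSeries F)
    (algebraMap F (PowerSeries F)).injective p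
  set P := PowerSeries.trunc (n + 1) f with hP
  have h1 : (PowerSeries.X : PowerSeries F) ^ (n + 1) ∣ f - (P : PowerSeries F) := by
    rw [PowerSeries.X_pow_dvd_iff]
    intro m hm
    rw [map_sub, Polynomial.coeff_coe, hP, PowerSeries.coeff_trunc, if_pos hm, sub_self]
  obtain ⟨r, hr⟩ := h1
  have h2 : f = (P : PowerSeries F) + X ^ (n + 1) * r := by rw [← hr]; ring
  have h3 : f ^ p = ((P ^ p : Polynomial F) : PowerSeries F) + X ^ ((n + 1) * p) * r ^ p := by
    rw [h2, add_pow_char, mul_pow, ← pow_mul, Polynomial.coe_pow]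
  rw [h3, map_add, coeff_X_pow_mul', if_neg, add_zero, Polynomial.coeff_coe,
    ← Polynomial.map_frobenius_expand p, Polynomial.coeff_map, Polynomial.coeff_expand hp.pos]
  · split_ifs with h
    · rw [hP, coeff_trunc, if_pos (Nat.lt_succ_of_le (Nat.div_le_self _ _))]; rfl
    · simp
  · have := hp.two_le
    nlinarith

theorem ls_coeff_pow_char {F : Type*} [Field F] (p : ℕ) [Fact p.Prime] [CharP F p]
    (g : LaurentSeries F) (n : ℤ) :
    (g ^ p).coeff n = if (p : ℤ) ∣ n then (g.coeff (n / p)) ^ p else 0 := by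
  have hp : p.Prime := Fact.out
  have hpz : (0:ℤ) < p := by exact_mod_cast hp.pos
  have hg := LaurentSeries.single_order_mul_powerSeriesPart g
  set o := g.order
  set f := g.powerSeriesPart
  have key : ∀ k : ℤ, g.coeff k = (HahnSeries.ofPowerSeries ℤ F f).coeff (k - o) := by
    intro k
    rw [← hg, HahnSeries.coeff_single_mul, one_mul]
  have h1 : g ^ p = HahnSeries.single (p * o) 1 * HahnSeries.ofPowerSeries ℤ F (f ^ p) := by
    rw [map_pow]; nth_rewrite 1 [← hg]; rw [mul_pow, HahnSeries.single_pow]; simp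
  rw [h1, HahnSeries.coeff_single_mul, one_mul, PowerSeries.coeff_coe]
  by_cases hd : (p : ℤ) ∣ n
  · obtain ⟨k, rfl⟩ := hd
    rw [if_pos (Dvd.intro _ rfl), Int.mul_ediv_cancel_left _ hpz.ne', key, PowerSeries.coeff_coe]
    have : (p:ℤ) * k - p * o = p * (k - o) := by ring
    rw [this]
    by_cases hk : k - o < 0
    · rw [if_pos hk, if_pos (by nlinarith), zero_pow hp.ne_zero]
    · rw [if_neg hk, if_neg (by push Not at hk ⊢; positivity), ps_coeff_pow_char p]
      rw [Int.natAbs_mul, Int.natAbs_natCast, if_pos (Dvd.intro _ rfl),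
        Nat.mul_div_cancel_left _ hp.pos]
  · rw [if_neg hd]
    split_ifs with h
    · rfl
    · rw [ps_coeff_pow_char p, if_neg]
      intro h'
      apply hd
      have := Int.natCast_dvd.2 h'
      have h2 : (p:ℤ) ∣ (n - p * o) + p * o := dvd_add this (Dvd.intro _ rfl)
      simpa using h2

theorem coeff_sum_X_pow {F : Type*} [Field F] (p : ℕ) [Fact p.Prime] [CharP F p]
    (g : Fin p → LaurentSeries F) (n : ℤ) (j0 : Fin p) :
    (∑ j : Fin p, HahnSeries.single (1:ℤ) (1:F) ^ (j : ℕ) * g j ^ p).coeff (p * n + (j0 : ℕ))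
      = ((g j0).coeff n) ^ p := by
  have hp : p.Prime := Fact.out
  have hpz : (0:ℤ) < p := by exact_mod_cast hp.pos
  rw [HahnSeries.coeff_sum, Finset.sum_eq_single j0]
  · rw [HahnSeries.single_pow, HahnSeries.coeff_single_mul, ls_coeff_pow_char p]
    simp only [nsmul_eq_mul, mul_one, add_sub_cancel_right, one_pow, one_mul, dvd_mul_right, if_true]
    rw [Int.mul_ediv_cancel_left _ hpz.ne']
  · intro j _ hj
    rw [HahnSeries.single_pow, HahnSeries.coeff_single_mul, ls_coeff_pow_char p, if_neg, mul_zero]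
    intro h
    apply hj
    simp only [nsmul_eq_mul, mul_one] at h
    have h3 : (p:ℤ) ∣ (j0 : ℕ) - (j : ℕ) := by
      obtain ⟨c, hc⟩ := h
      exact ⟨c - n, by linarith⟩
    have h4 := j.2
    have h5 := j0.2
    have : ((j0 : ℕ):ℤ) - (j : ℕ) = 0 := by
      apply Int.eq_zero_of_abs_lt_dvd h3
      rw [abs_lt]; omega
    apply Fin.ext; omega
  · simp

theorem X_pow_indep {F : Type*} [Field F] (p : ℕ) [Fact p.Prime] [CharP F p]
    (g : Fin p → LaurentSeries F)
    (h : ∑ j : Fin p, HahnSeries.single (1:ℤ) (1:F) ^ (j : ℕ) * g j ^ p = 0) (j : Fin p) :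
    g j = 0 := by
  ext n
  have := coeff_sum_X_pow p g n j
  rw [h] at this
  have hp : p.Prime := Fact.out
  simpa using (pow_eq_zero_iff hp.ne_zero).1 this.symm

open Polynomial in
theorem poly_decomp {F : Type*} [Field F] [Finite F] (p : ℕ) [Fact p.Prime] [CharP F p]
    (N : ℕ) (P : F[X]) (hP : P ∈ degreeLT F (p * N)) :
    ∃ Q : Fin p → F[X], (∀ j, Q j ∈ degreeLT F N) ∧ P = ∑ j : Fin p, X ^ (j : ℕ) * Q j ^ p := by
  have hp : p.Prime := Fact.out
  rw [mem_degreeLT] at hP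
  have hsum : P = ∑ k ∈ Finset.range (p * N), C (P.coeff k) * X ^ k := by
    by_cases h0 : p * N = 0
    · rw [h0] at hP ⊢
      have : P = 0 := by
        rw [← degree_eq_bot]; 
        simpa using hP
      simp [this]
    · apply as_sum_range_C_mul_X_pow' 
      by_cases hP0 : P = 0
      · subst hP0; simpa using Nat.pos_of_ne_zero h0
      · rw [degree_eq_natDegree hP0] at hP; exact_mod_cast hP
  rw [hsum]
  apply Finset.sum_induction _ (fun P => ∃ Q : Fin p → F[X], (∀ j, Q j ∈ degreeLT F N) ∧
    P = ∑ j : Fin p, X ^ (j : ℕ) * Q j ^ p)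
  · rintro a b ⟨Q, hQ, rfl⟩ ⟨R, hR, rfl⟩
    refine ⟨Q + R, fun j => Submodule.add_mem _ (hQ j) (hR j), ?_⟩
    rw [← Finset.sum_add_distrib]
    refine Finset.sum_congr rfl fun j _ => ?_
    rw [Pi.add_apply, add_pow_char, mul_add]
  · exact ⟨0, fun j => Submodule.zero_mem _, by simp [hp.ne_zero]⟩
  · intro k hk
    rw [Finset.mem_range] at hk
    obtain ⟨b, hb⟩ := (frobeniusEquiv F p).surjective (P.coeff k)
    rw [frobeniusEquiv_apply, frobenius_def] at hb
    refine ⟨fun j => if (j : ℕ) = k % p then C b * X ^ (k / p) else 0, ?_, ?_⟩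
    · intro j
      dsimp only
      split_ifs
      · rw [mem_degreeLT]
        refine (degree_C_mul_X_pow_le _ _).trans_lt ?_
        exact_mod_cast Nat.div_lt_of_lt_mul hk
      · exact Submodule.zero_mem _
    · rw [Finset.sum_eq_single (⟨k % p, Nat.mod_lt _ hp.pos⟩ : Fin p)]
      · simp only [if_true]
        rw [mul_pow, ← C_pow, hb, ← pow_mul, mul_left_comm, ← pow_add, mul_comm (k/p) p, Nat.mod_add_div]
      · intro j _ hj
        dsimp only
        rw [if_neg (fun h => hj (Fin.ext h)), zero_pow hp.ne_zero, mul_zero]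
      · simp

open Polynomial in
theorem ratFunc_decomp {F : Type*} [Field F] [Finite F] (p : ℕ) [Fact p.Prime] [CharP F p]
    (c : RatFunc F) :
    ∃ Q : Fin p → RatFunc F, c = ∑ j : Fin p, RatFunc.X ^ (j : ℕ) * Q j ^ p := by
  have hp : p.Prime := Fact.out
  set n := c.num
  set d := c.denom
  have hd : (algebraMap F[X] (RatFunc F)) d ≠ 0 := RatFunc.algebraMap_ne_zero c.denom_ne_zero
  have hmem : n * d ^ (p - 1) ∈ degreeLT F (p * ((n * d ^ (p-1)).natDegree + 1)) := by
    rw [mem_degreeLT]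
    refine degree_le_natDegree.trans_lt ?_
    have := hp.pos
    norm_cast
    nlinarith
  obtain ⟨Q, -, hQ⟩ := poly_decomp p _ _ hmem
  refine ⟨fun j => algebraMap F[X] (RatFunc F) (Q j) / algebraMap F[X] (RatFunc F) d, ?_⟩
  have h1 : c = algebraMap F[X] (RatFunc F) (n * d ^ (p - 1)) / (algebraMap F[X] (RatFunc F) d) ^ p := by
    conv_lhs => rw [← RatFunc.num_div_denom c]
    rw [map_mul, map_pow, div_eq_div_iff hd (pow_ne_zero _ hd), mul_assoc, ← pow_succ,
      Nat.sub_add_cancel hp.pos]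
  rw [h1, hQ, map_sum, Finset.sum_div]
  refine Finset.sum_congr rfl fun j _ => ?_
  rw [map_mul, map_pow, map_pow, RatFunc.algebraMap_X, div_pow, mul_div_assoc]

theorem charP_ls (F : Type*) [Field F] (p : ℕ) [CharP F p] : CharP (LaurentSeries F) p :=
  charP_of_injective_algebraMap (R := F) (A := LaurentSeries F)
    (algebraMap F (LaurentSeries F)).injective p

theorem lin_comb_pow {F : Type*} [Field F] [Finite F] (p : ℕ) [Fact p.Prime] [CharP F p]
    {ι : Type*} (s : Finset ι) (v : ι → LaurentSeries F) (Q : ι → Fin p → RatFunc F) :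
    ∑ i ∈ s, (∑ j : Fin p, RatFunc.X ^ (j : ℕ) * Q i j ^ p) • v i ^ p
    = ∑ j : Fin p, HahnSeries.single (1:ℤ) (1:F) ^ (j : ℕ) * (∑ i ∈ s, Q i j • v i) ^ p := by
  have := charP_ls F p
  simp_rw [sum_pow_char, Finset.mul_sum, Finset.sum_smul]
  rw [Finset.sum_comm]
  refine Finset.sum_congr rfl fun j _ => Finset.sum_congr rfl fun i _ => ?_
  rw [Algebra.smul_def, Algebra.smul_def, map_mul, map_pow, map_pow, mul_pow, mul_assoc]
  rw [RatFunc.coe_X]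

theorem linInd_pow {F : Type*} [Field F] [Finite F] (p : ℕ) [Fact p.Prime] [CharP F p]
    {ι : Type*} (v : ι → LaurentSeries F) (hv : LinearIndependent (RatFunc F) v) :
    LinearIndependent (RatFunc F) (fun i => v i ^ p) := by
  have hp : p.Prime := Fact.out
  rw [linearIndependent_iff'] at hv ⊢
  intro s c hc i hi
  choose Q hQ using fun i => ratFunc_decomp p (c i)
  simp_rw [hQ] at hc
  rw [lin_comb_pow p] at hc
  have h1 := X_pow_indep p _ hc
  rw [hQ i]
  refine Finset.sum_eq_zero fun j _ => ?_
  rw [hv s (fun i => Q i j) (h1 j) i hi, zero_pow hp.ne_zero, mul_zero]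

theorem isSeparable_of_alg {F : Type*} [Field F] [Finite F] (p : ℕ) [Fact p.Prime] [CharP F p]
    (y : LaurentSeries F) (hy : IsAlgebraic (RatFunc F) y) : IsSeparable (RatFunc F) y := by
  have hp : p.Prime := Fact.out
  have hint : IsIntegral (RatFunc F) y := hy.isIntegral
  have : CharP (RatFunc F) p := charP_of_injective_algebraMap (R := F) (A := RatFunc F)
    (algebraMap F (RatFunc F)).injective p
  rcases ((minpoly (RatFunc F) y).separable_or p (minpoly.irreducible hint)) with h | ⟨_, g, hg, hge⟩
  · exact h
  exfalso
  have hli : LinearIndependent (RatFunc F) (fun i : Fin (minpoly (RatFunc F) y).natDegree => y ^ (i:ℕ)) :=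
    linearIndependent_pow y
  have hd : (minpoly (RatFunc F) y).natDegree = g.natDegree * p := by
    rw [← hge, Polynomial.natDegree_expand]
  have hg0 : 0 < g.natDegree := by
    have := minpoly.natDegree_pos hint
    rw [hd] at this
    exact Nat.pos_of_mul_pos_right this
  have hle : g.natDegree + 1 ≤ (minpoly (RatFunc F) y).natDegree := by
    rw [hd]; nlinarith [hp.two_le]
  have h2 := linInd_pow p _ (hli.comp (Fin.castLE hle) (Fin.castLE_injective hle))
  rw [linearIndependent_iff'] at h2
  have h3 : Polynomial.aeval y (Polynomial.expand (RatFunc F) p g) = 0 := by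
    rw [hge]; exact minpoly.aeval _ _
  rw [Polynomial.expand_aeval, Polynomial.aeval_eq_sum_range, ← Fin.sum_univ_eq_sum_range
    (fun i => g.coeff i • (y ^ p) ^ i)] at h3
  have h4 := h2 Finset.univ (fun i => g.coeff i) (by
    rw [← h3]
    refine Finset.sum_congr rfl fun i _ => ?_
    simp [← pow_mul, mul_comm]) (Fin.last _) (Finset.mem_univ _)
  simp at h4
  rw [h4] at hg0; simp at hg0

theorem exists_frob_system_gen {k K : Type*} [Field k] [Field K] [Algebra k K] (p : ℕ)
    (H : ∀ (n : ℕ) (v : Fin n → K), LinearIndependent k v → LinearIndependent k (fun i => v i ^ p))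
    (g : K) (hg : IsAlgebraic k g) :
    ∃ (d : ℕ) (b : Fin d → K) (r : Fin d → Fin d → k) (c : Fin d → k),
      (∀ i, b i = ∑ j, algebraMap k K (r i j) * b j ^ p) ∧
      g = ∑ i, algebraMap k K (c i) * b i := by
  let M := IntermediateField.adjoin k {g}
  have : FiniteDimensional k M := IntermediateField.adjoin.finiteDimensional hg.isIntegral
  let b := Module.finBasis k M
  have h1 : LinearIndependent k (fun i => ((b i : M) : K)) :=
    b.linearIndependent.map' M.val.toLinearMap (LinearMap.ker_eq_bot.2 M.val.injective)
  have h2 := H _ _ h1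
  have h3 : LinearIndependent k (fun i => (b i) ^ p) := by
    apply LinearIndependent.of_comp M.val.toLinearMap
    exact h2
  have hpos : 0 < Module.finrank k M := Module.finrank_pos
  have : Nonempty (Fin (Module.finrank k M)) := ⟨⟨0, hpos⟩⟩
  let b' := basisOfLinearIndependentOfCardEqFinrank h3 (by simp)
  have hb' : ∀ i, b' i = b i ^ p := by
    intro i
    simp [b']
  refine ⟨_, fun i => (b i : K), fun i j => b'.repr (b i) j,
    fun i => b.repr ⟨g, IntermediateField.mem_adjoin_simple_self _ g⟩ i, ?_, ?_⟩
  · intro i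
    have h7 := congrArg (fun y : M => (y : K)) (b'.sum_repr (b i))
    rw [AddSubmonoidClass.coe_finsetSum] at h7
    refine h7.symm.trans (Finset.sum_congr rfl fun j _ => ?_)
    rw [hb', IntermediateField.coe_smul, Algebra.smul_def]
    rfl
  · have h7 := congrArg (fun y : M => (y : K)) (b.sum_repr ⟨g, IntermediateField.mem_adjoin_simple_self _ g⟩)
    rw [AddSubmonoidClass.coe_finsetSum] at h7
    refine h7.symm.trans (Finset.sum_congr rfl fun j _ => ?_)
    rw [IntermediateField.coe_smul, Algebra.smul_def]

open Polynomial in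
theorem exists_frob_system {F : Type*} [Field F] [Finite F] (p : ℕ) [Fact p.Prime] [CharP F p]
    (g : LaurentSeries F) (hg : IsAlgebraic (RatFunc F) g) :
    ∃ (d : ℕ) (e : Fin d → LaurentSeries F) (s : Fin d → Fin d → F[X]) (P : Fin d → F[X]),
      (∀ i, e i = ∑ k, algebraMap F[X] (LaurentSeries F) (s i k) * e k ^ p) ∧
      g = ∑ i, algebraMap F[X] (LaurentSeries F) (P i) * e i := by
  have hp : p.Prime := Fact.out
  obtain ⟨d, b, r1, c1, hb, hgb⟩ := exists_frob_system_gen p (fun n v hv => linInd_pow p v hv) g hg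
  let r : Fin d × Fin d ⊕ Fin d → RatFunc F := Sum.elim (fun ik => r1 ik.1 ik.2) c1
  obtain ⟨⟨D, hD⟩, hD'⟩ := IsLocalization.exist_integer_multiples_of_finite (nonZeroDivisors F[X]) r
  choose t ht using hD'
  have hD0 : D ≠ 0 := nonZeroDivisors.ne_zero hD
  set A := algebraMap F[X] (LaurentSeries F) with hA
  have hAD : A D ≠ 0 := by
    rw [hA]
    exact (map_ne_zero_iff _ (FaithfulSMul.algebraMap_injective F[X] (LaurentSeries F))).2 hD0
  have hr : ∀ x, algebraMap (RatFunc F) (LaurentSeries F) (r x) = A (t x) / A D := by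
    intro x
    rw [eq_div_iff hAD]
    have := ht x
    have h5 := congrArg (algebraMap (RatFunc F) (LaurentSeries F)) this
    rw [← IsScalarTower.algebraMap_apply] at h5
    rw [hA, h5]
    simp only [Algebra.smul_def, map_mul]
    rw [mul_comm, ← IsScalarTower.algebraMap_apply]
  have hbi : ∀ i, b i = ∑ k, A (t (Sum.inl (i, k))) / A D * b k ^ p := by
    intro i
    nth_rewrite 1 [hb i]
    refine Finset.sum_congr rfl fun k _ => ?_
    rw [← hr]; rfl
  have hgi : g = ∑ k, A (t (Sum.inr k)) / A D * b k := by
    nth_rewrite 1 [hgb]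
    refine Finset.sum_congr rfl fun k _ => ?_
    rw [← hr]; rfl
  refine ⟨d, fun i => b i / A D, fun i k => t (Sum.inl (i, k)) * D ^ (p - 2),
    fun i => t (Sum.inr i), ?_, ?_⟩
  · intro i
    dsimp only
    nth_rewrite 1 [hbi]
    rw [Finset.sum_div]
    refine Finset.sum_congr rfl fun k _ => ?_
    obtain ⟨q, rfl⟩ : ∃ q, p = q + 2 := ⟨p - 2, by have := hp.two_le; omega⟩
    rw [map_mul, map_pow, Nat.add_sub_cancel, div_pow]
    field_simp
    ring
  · nth_rewrite 1 [hgi]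
    refine Finset.sum_congr rfl fun k _ => ?_
    field_simp

open Polynomial in
theorem exists_stable_set {F : Type*} [Field F] [Finite F] (p : ℕ) [Fact p.Prime] [CharP F p]
    (g : LaurentSeries F) (hg : IsAlgebraic (RatFunc F) g) :
    ∃ S : Set (LaurentSeries F), S.Finite ∧ g ∈ S ∧ ∀ y ∈ S, ∀ j : ℕ, j < p → ∃ h ∈ S,
      ∀ n : ℤ, y.coeff (p * n + j) = h.coeff n ^ p := by
  have hp : p.Prime := Fact.out
  have := charP_ls F p
  obtain ⟨d, e, s, P, he, hgP⟩ := exists_frob_system p g hg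
  set A := algebraMap F[X] (LaurentSeries F) with hA
  have hAX : A X = HahnSeries.single 1 1 := by
    rw [hA, IsScalarTower.algebraMap_apply F[X] (RatFunc F) (LaurentSeries F), RatFunc.algebraMap_X,
      RatFunc.coe_X]
  let N := ∑ i, ∑ k, ((s i k).natDegree + 1) + ∑ i, ((P i).natDegree + 1)
  have hNs : ∀ i k, (s i k).natDegree + 1 ≤ N := fun i k =>
    (((Finset.single_le_sum (f := fun k => (s i k).natDegree + 1) (by simp) (Finset.mem_univ k)).trans
      (Finset.single_le_sum (f := fun i => ∑ k, ((s i k).natDegree + 1)) (by simp) (Finset.mem_univ i))).trans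
      (Nat.le_add_right _ _))
  have hNP : ∀ i, (P i).natDegree + 1 ≤ N := fun i =>
    ((Finset.single_le_sum (f := fun k => (P k).natDegree + 1) (by simp) (Finset.mem_univ i)).trans
      (Nat.le_add_left _ _))
  have hfin : Finite (degreeLT F N) := Finite.of_equiv _ (degreeLTEquiv F N).symm.toEquiv
  refine ⟨Set.range (fun Q : Fin d → degreeLT F N => ∑ i, A (Q i : F[X]) * e i), Set.finite_range _, ?_, ?_⟩
  · refine ⟨fun i => ⟨P i, ?_⟩, hgP.symm⟩
    rw [mem_degreeLT]
    refine degree_le_natDegree.trans_lt ?_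
    exact_mod_cast hNP i
  · rintro _ ⟨Q, rfl⟩ j hj
    have hmem : ∀ k, ∑ i, (Q i : F[X]) * s i k ∈ degreeLT F (p * N) := by
      intro k
      refine Submodule.sum_mem _ fun i _ => ?_
      by_cases h0 : (Q i : F[X]) * s i k = 0
      · rw [h0]; exact Submodule.zero_mem _
      have hq := (Q i).2
      rw [mem_degreeLT, degree_eq_natDegree (left_ne_zero_of_mul h0)] at hq
      have hq' : (Q i : F[X]).natDegree < N := by exact_mod_cast hq
      rw [mem_degreeLT, degree_eq_natDegree h0,
        natDegree_mul (left_ne_zero_of_mul h0) (right_ne_zero_of_mul h0)]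
      have := hNs i k
      have := hp.two_le
      norm_cast
      nlinarith
    choose R hR hR' using fun k => poly_decomp p N _ (hmem k)
    have key : ∑ i, A (Q i : F[X]) * e i = ∑ j : Fin p, HahnSeries.single (1:ℤ) (1:F) ^ (j : ℕ) *
        (∑ k, A (R k j) * e k) ^ p := by
      calc ∑ i, A (Q i : F[X]) * e i = ∑ i, ∑ k, A (Q i : F[X]) * A (s i k) * e k ^ p := by
            refine Finset.sum_congr rfl fun i _ => ?_
            nth_rewrite 1 [he i]
            rw [Finset.mul_sum]
            simp_rw [mul_assoc]
        _ = ∑ k, A (∑ i, (Q i : F[X]) * s i k) * e k ^ p := by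
            rw [Finset.sum_comm]
            refine Finset.sum_congr rfl fun k _ => ?_
            rw [map_sum, Finset.sum_mul]
            simp_rw [map_mul]
        _ = ∑ k, ∑ j : Fin p, A X ^ (j : ℕ) * (A (R k j) * e k) ^ p := by
            refine Finset.sum_congr rfl fun k _ => ?_
            rw [hR' k, map_sum, Finset.sum_mul]
            refine Finset.sum_congr rfl fun j _ => ?_
            rw [map_mul, map_pow, map_pow, mul_pow, mul_assoc]
        _ = _ := by
            rw [Finset.sum_comm]
            refine Finset.sum_congr rfl fun j _ => ?_
            rw [sum_pow_char, Finset.mul_sum, hAX]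
    refine ⟨∑ k, A (R k ⟨j, hj⟩) * e k, ⟨fun k => ⟨R k ⟨j, hj⟩, hR k _⟩, rfl⟩, fun n => ?_⟩
    dsimp only
    rw [key]
    exact coeff_sum_X_pow p (fun j => ∑ k, A (R k j) * e k) n ⟨j, hj⟩

theorem christol {F : Type*} [Field F] [Finite F] (p : ℕ) [Fact p.Prime] [CharP F p]
    (g : LaurentSeries F) (hg : IsAlgebraic (RatFunc F) g) :
    IsKAutomatic p (fun n : ℕ => g.coeff (n : ℤ)) := by
  have hp : p.Prime := Fact.out
  obtain ⟨S, hS, hgS, hst⟩ := exists_stable_set p g hg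
  have key : ∀ i : ℕ, ∀ y ∈ S, ∀ j : ℕ, j < p ^ i → ∃ h ∈ S,
      ∀ n : ℤ, y.coeff (n * p ^ i + j) = h.coeff n ^ (p ^ i) := by
    intro i
    induction i with
    | zero => intro y hy j hj; exact ⟨y, hy, fun n => by simp at hj; simp [hj]⟩
    | succ i ih =>
      intro y hy j hj
      obtain ⟨h, hh, hc⟩ := hst y hy (j % p) (Nat.mod_lt _ hp.pos)
      obtain ⟨h', hh', hc'⟩ := ih h hh (j / p) (Nat.div_lt_of_lt_mul (by rw [pow_succ'] at hj; exact hj))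
      refine ⟨h', hh', fun n => ?_⟩
      have : n * (p:ℤ) ^ (i + 1) + j = p * (n * p ^ i + (j / p : ℕ)) + (j % p : ℕ) := by
        have h1 : (j : ℤ) = p * (j / p : ℕ) + (j % p : ℕ) := by
          exact_mod_cast (Nat.div_add_mod j p).symm
        generalize ((j / p : ℕ) : ℤ) = u at *
        generalize ((j % p : ℕ) : ℤ) = w at *
        rw [h1]; ring
      rw [this, hc, hc', ← pow_mul, pow_succ]
  refine Set.Finite.subset ((hS.prod (Set.finite_univ (α := F → F))).image
    (fun hs => fun n : ℕ => hs.2 (hs.1.coeff (n : ℤ)))) ?_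
  rintro c ⟨i, j, hj, rfl⟩
  obtain ⟨h, hh, hc⟩ := key i g hgS j hj
  refine ⟨(h, fun a => a ^ p ^ i), ⟨hh, trivial⟩, ?_⟩
  funext n
  simp only
  rw [← hc]
  push_cast
  rfl

theorem automatic_comp {α β ι : Type*} [Finite ι] (k : ℕ) (s : ι → ℕ → α)
    (hs : ∀ i, IsKAutomatic k (s i)) (Φ : (ι → α) → β) :
    IsKAutomatic k (fun n => Φ (fun i => s i n)) := by
  have : (Set.univ.pi (fun i => {c : ℕ → α | ∃ a j : ℕ, j < k ^ a ∧ c = fun n => s i (n * k ^ a + j)})).Finite :=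
    Set.Finite.pi' hs |>.subset (by intro x hx; simpa using hx)
  refine (this.image (fun c => fun n => Φ (fun i => c i n))).subset ?_
  rintro c ⟨a, j, hj, rfl⟩
  exact ⟨fun i n => s i (n * k ^ a + j), fun i _ => ⟨a, j, hj, rfl⟩, rfl⟩

section LemD
open Polynomial IntermediateField

theorem minpoly_eq_map_of_closed {E G K : Type*} [Field E] [Field G] [Field K] [Algebra E G] [Algebra G K]
    [Algebra E K] [IsScalarTower E G K]
    (hE : ∀ y : G, IsAlgebraic E y → y ∈ (algebraMap E G).range) (y : K) (hy : IsAlgebraic E y) :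
    (minpoly E y).map (algebraMap E G) = minpoly G y := by
  have hyi := hy.isIntegral
  have hyG : IsIntegral G y := hyi.tower_top
  have hdvd : minpoly G y ∣ (minpoly E y).map (algebraMap E G) := minpoly.dvd_map_of_isScalarTower E G y
  have hlift : minpoly G y ∈ lifts (algebraMap E G) := by
    rw [lifts_iff_coeff_lifts]
    intro n
    have := Polynomial.isIntegral_coeff_of_dvd (minpoly E y) (minpoly G y) (minpoly.monic hyi)
      (minpoly.monic hyG) hdvd n
    exact hE _ this.isAlgebraic
  obtain ⟨Q, hQ, hQd, hQm⟩ := lifts_and_degree_eq_and_monic hlift (minpoly.monic hyG)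
  have h2 : minpoly E y ∣ Q := by
    apply minpoly.dvd
    have := minpoly.aeval G y
    rw [← hQ, aeval_map_algebraMap] at this
    exact this
  apply eq_of_monic_of_associated ((minpoly.monic hyi).map _) (minpoly.monic hyG)
  refine associated_of_dvd_dvd ?_ hdvd
  rw [← hQ]
  exact Polynomial.map_dvd _ h2

theorem exists_pow_isSeparable {E K : Type*} [Field E] [Field K] [Algebra E K] (p : ℕ) [ExpChar E p]
    (y : K) (hy : IsAlgebraic E y) : ∃ n, ∀ n', n ≤ n' → IsSeparable E (y ^ p ^ n') := by
  obtain ⟨g, hg, n, hn⟩ := (minpoly.irreducible hy.isIntegral).hasSeparableContraction p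
  refine ⟨n, fun n' hn' => ?_⟩
  have h1 : IsSeparable E (y ^ p ^ n) := by
    have : aeval (y ^ p ^ n) g = 0 := by
      rw [← expand_aeval, hn, minpoly.aeval]
    exact hg.of_dvd (minpoly.dvd _ _ this)
  obtain ⟨c, rfl⟩ := Nat.exists_eq_add_of_le hn'
  rw [pow_add, pow_mul]
  rw [← mem_separableClosure_iff] at h1 ⊢
  exact pow_mem h1 _

theorem lemD1 {E G K : Type*} [Field E] [Field G] [Field K] [Algebra E G] [Algebra G K]
    [Algebra E K] [IsScalarTower E G K] (p : ℕ) [ExpChar E p] [ExpChar K p]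
    (hE : ∀ y : G, IsAlgebraic E y → y ∈ (algebraMap E G).range) (z x : K) (m : ℕ)
    (hz : IsAlgebraic E z) (hx : IsSeparable E⟮z⟯ x)
    (hspan : ∀ y : K, ∃ g : Fin m → G, y = ∑ i, algebraMap G K (g i) * z ^ (i : ℕ)) :
    ∃ e : Fin m → E, x = ∑ i, algebraMap E K (e i) * z ^ (i : ℕ) := by
  have hxa : IsAlgebraic E x := by
    have := IntermediateField.isAlgebraic_adjoin_simple hz.isIntegral
    exact hx.isIntegral.isAlgebraic.restrictScalars E
  obtain ⟨n1, hn1⟩ := exists_pow_isSeparable p z hz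
  obtain ⟨n2, hn2⟩ := exists_pow_isSeparable p x hxa
  set n := max n1 n2
  have hzs := hn1 n (le_max_left _ _)
  have hxs := hn2 n (le_max_right _ _)
  set zq := z ^ p ^ n with hzq
  set xq := x ^ p ^ n with hxq
  have hxz : xq ∈ E⟮zq⟯ := by
    let N := IntermediateField.adjoin E ({zq, xq} : Set K)
    have hNs : Algebra.IsSeparable E N := by
      rw [IntermediateField.isSeparable_adjoin_iff_isSeparable]
      rintro y (rfl | rfl)
      · exact hzs
      · exact hxs
    have hNf : FiniteDimensional E N := by
      apply IntermediateField.finiteDimensional_adjoin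
      rintro y (rfl | rfl)
      · exact hzs.isIntegral
      · exact hxs.isIntegral
    obtain ⟨w, hw⟩ := Field.exists_primitive_element E N
    have hN : Module.finrank E N = (minpoly E w).natDegree := by
      rw [← IntermediateField.adjoin.finrank (Algebra.IsIntegral.isIntegral w), hw, IntermediateField.finrank_top']
    have hwK : minpoly E (w : K) = minpoly E w := minpoly.algebraMap_eq N.val.injective w
    have hwa : IsAlgebraic E (w : K) := (Algebra.IsAlgebraic.isAlgebraic w).algebraMap
    have hle : N ≤ (IntermediateField.adjoin G {zq}).restrictScalars E := by
      rw [IntermediateField.adjoin_le_iff]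
      have h0 : zq ∈ IntermediateField.adjoin G {zq} := IntermediateField.mem_adjoin_simple_self _ _
      rintro y (rfl | rfl)
      · exact h0
      · show xq ∈ IntermediateField.adjoin G {zq}
        obtain ⟨g, hg⟩ := hspan x
        rw [hxq, hg, sum_pow_char_pow]
        refine sum_mem fun i _ => ?_
        rw [mul_pow, ← pow_mul, mul_comm (i : ℕ), pow_mul]
        exact mul_mem (pow_mem (_root_.algebraMap_mem _ _) _) (pow_mem h0 _)
    have hwG : (w : K) ∈ IntermediateField.adjoin G {zq} := hle w.2
    have hzGi : IsIntegral G zq := hzs.isIntegral.tower_top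
    have : FiniteDimensional G (IntermediateField.adjoin G {zq}) := IntermediateField.adjoin.finiteDimensional hzGi
    have h3 : (minpoly G (w : K)).natDegree ≤ (minpoly G zq).natDegree := by
      rw [← IntermediateField.adjoin.finrank hzGi]
      have := minpoly.natDegree_le (A := G) (⟨w, hwG⟩ : IntermediateField.adjoin G {zq})
      rwa [← minpoly.algebraMap_eq (IntermediateField.adjoin G {zq}).val.injective] at this
    rw [← minpoly_eq_map_of_closed hE _ hwa, ← minpoly_eq_map_of_closed hE zq hzs.isIntegral.isAlgebraic,
      natDegree_map, natDegree_map, hwK, ← hN, ← IntermediateField.adjoin.finrank hzs.isIntegral] at h3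
    have h4 : E⟮zq⟯ = N := by
      apply IntermediateField.eq_of_le_of_finrank_le _ h3
      rw [IntermediateField.adjoin_le_iff]
      rintro y rfl
      exact IntermediateField.subset_adjoin _ _ (by simp)
    rw [h4]
    exact IntermediateField.subset_adjoin _ _ (by simp)
  have hxL : x ∈ E⟮z⟯ := by
    have h1 : xq ∈ E⟮z⟯ := by
      have : E⟮zq⟯ ≤ E⟮z⟯ := by
        rw [IntermediateField.adjoin_le_iff]
        rintro y rfl
        exact pow_mem (IntermediateField.mem_adjoin_simple_self _ _) _
      exact this hxz
    have : ExpChar E⟮z⟯ p := expChar_of_injective_algebraMap (algebraMap E E⟮z⟯).injective p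
    have h2 : x ∈ separableClosure E⟮z⟯ K ⊓ perfectClosure E⟮z⟯ K := by
      refine ⟨mem_separableClosure_iff.2 hx, ?_⟩
      show x ∈ perfectClosure E⟮z⟯ K
      rw [mem_perfectClosure_iff_pow_mem p]
      exact ⟨n, ⟨⟨xq, h1⟩, rfl⟩⟩
    rw [separableClosure_inf_perfectClosure, IntermediateField.mem_bot] at h2
    obtain ⟨y, rfl⟩ := h2
    exact y.2
  have hd : (minpoly E z).natDegree ≤ m := by
    rw [← natDegree_map (algebraMap E G), minpoly_eq_map_of_closed hE z hz]
    obtain ⟨g, hg⟩ := hspan (z ^ m)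
    have hdeg : (∑ i : Fin m, C (g i) * (X : G[X]) ^ (i : ℕ)).degree < m := by
      exact degree_sum_fin_lt _
    have hmon : (X ^ m - ∑ i : Fin m, C (g i) * (X : G[X]) ^ (i : ℕ)).Monic := monic_X_pow_sub hdeg
    have := minpoly.min G z hmon (by simp [hg])
    have h5 := natDegree_le_natDegree this
    refine h5.trans ((natDegree_sub_le_of_le (natDegree_X_pow_le m)
      (natDegree_le_of_degree_le hdeg.le)).trans (max_self m).le)
  rw [← IntermediateField.mem_toSubalgebra, IntermediateField.adjoin_simple_toSubalgebra_of_isAlgebraic hz,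
    Algebra.adjoin_singleton_eq_range_aeval] at hxL
  obtain ⟨f, hf⟩ := hxL
  have hmono := minpoly.monic hz.isIntegral
  have hf' : aeval z (f %ₘ minpoly E z) = x := by
    rw [← hf]
    have := congrArg (aeval z) (modByMonic_add_div f (minpoly E z))
    simp
  have hfd : (f %ₘ minpoly E z).natDegree < m :=
    (natDegree_modByMonic_lt f hmono (minpoly.ne_one E z)).trans_le hd
  refine ⟨fun i => (f %ₘ minpoly E z).coeff i, ?_⟩
  rw [Fin.sum_univ_eq_sum_range (fun i => algebraMap E K ((f %ₘ minpoly E z).coeff i) * z ^ i), ← hf',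
    aeval_eq_sum_range' hfd]
  simp_rw [Algebra.smul_def]

theorem adjoin_mono_tower {k E K : Type*} [Field k] [Field E] [Field K] [Algebra k E] [Algebra E K]
    [Algebra k K] [IsScalarTower k E K] (z : K) : ∀ y ∈ k⟮z⟯, y ∈ E⟮z⟯ := by
  intro y hy
  refine IntermediateField.adjoin_induction k (p := fun y _ => y ∈ E⟮z⟯) ?_ ?_ ?_ ?_ ?_ hy
  · rintro y rfl
    exact IntermediateField.mem_adjoin_simple_self E _
  · intro r
    rw [IsScalarTower.algebraMap_apply k E K]
    exact IntermediateField.algebraMap_mem _ _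
  · exact fun _ _ _ _ => add_mem
  · exact fun _ _ => inv_mem
  · exact fun _ _ _ _ => mul_mem

theorem lemD {k G K : Type*} [Field k] [Field G] [Field K] [Algebra k G] [Algebra G K]
    [Algebra k K] [IsScalarTower k G K] (p : ℕ) [ExpChar k p]
    (z x : K) (m : ℕ)
    (hz : IsAlgebraic k z)
    (P : K[X]) (hP : P.Separable) (hPx : P.eval x = 0) (hPc : ∀ n, P.coeff n ∈ k⟮z⟯)
    (hspan : ∀ y : K, ∃ g : Fin m → G, y = ∑ i, algebraMap G K (g i) * z ^ (i : ℕ)) :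
    ∃ e : Fin m → G, (∀ i, IsAlgebraic k (e i)) ∧ x = ∑ i, algebraMap G K (e i) * z ^ (i : ℕ) := by
  let E := algebraicClosure k G
  have : ExpChar E p := expChar_of_injective_algebraMap (algebraMap k E).injective p
  have : ExpChar K p := expChar_of_injective_algebraMap (algebraMap k K).injective p
  have : IsScalarTower k E K := IsScalarTower.of_algebraMap_eq fun r => by
    rw [IsScalarTower.algebraMap_apply k G K]; rfl
  have hE : ∀ y : G, IsAlgebraic E y → y ∈ (algebraMap E G).range := by
    intro y hy
    have : IsAlgebraic k y := hy.restrictScalars k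
    exact ⟨⟨y, mem_algebraicClosure_iff.2 this⟩, rfl⟩
  have hsub : ∀ y ∈ k⟮z⟯, y ∈ E⟮z⟯ := adjoin_mono_tower z
  have hl : P ∈ lifts (algebraMap E⟮z⟯ K) := by
    rw [lifts_iff_coeff_lifts]
    exact fun n => ⟨⟨_, hsub _ (hPc n)⟩, rfl⟩
  obtain ⟨Q, hQ⟩ := hl
  have hQs : IsSeparable E⟮z⟯ x := by
    have h1 : Q.Separable := by
      rw [← separable_map (algebraMap E⟮z⟯ K)]
      have : Q.map (algebraMap E⟮z⟯ K) = P := hQ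
      rwa [this]
    refine h1.of_dvd (minpoly.dvd _ _ ?_)
    have : Q.map (algebraMap E⟮z⟯ K) = P := hQ
    rw [← eval_map_algebraMap, this, hPx]
  obtain ⟨e, he⟩ := lemD1 (E := E) (G := G) p hE z x m
    (hz.extendScalars (algebraMap k E).injective) hQs hspan
  refine ⟨fun i => algebraMap E G (e i), fun i => ?_, ?_⟩
  · obtain ⟨y, hy⟩ : ∃ y : algebraicClosure k G, y = e i := ⟨e i, rfl⟩
    dsimp only
    rw [← hy]
    exact (mem_algebraicClosure_iff (F := k) (E := G)).1 y.2
  · exact he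
end LemD

open Polynomial in
theorem lemD_hom {k G K : Type*} [Field k] [Field G] [Field K] [Algebra k G] (φ : G →+* K)
    (p : ℕ) [ExpChar k p] (z x : K) (m : ℕ)
    (hz : ∃ Q : k[X], Q ≠ 0 ∧ Q.eval₂ (φ.comp (algebraMap k G)) z = 0)
    (P : K[X]) (hP : P.Separable) (hPx : P.eval x = 0)
    (hPc : ∀ (S : Subfield K), (∀ r, φ (algebraMap k G r) ∈ S) → z ∈ S → ∀ n, P.coeff n ∈ S)
    (hspan : ∀ y : K, ∃ g : Fin m → G, y = ∑ i, φ (g i) * z ^ (i : ℕ)) :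
    ∃ e : Fin m → G, (∀ i, IsAlgebraic k (e i)) ∧ x = ∑ i, φ (e i) * z ^ (i : ℕ) := by
  let _ : Algebra G K := φ.toAlgebra
  let _ : Algebra k K := (φ.comp (algebraMap k G)).toAlgebra
  have : IsScalarTower k G K := IsScalarTower.of_algebraMap_eq fun r => rfl
  refine lemD (k := k) (G := G) p z x m hz P hP hPx ?_ hspan
  intro n
  exact hPc (IntermediateField.adjoin k {z}).toSubfield
    (fun r => (IntermediateField.adjoin k {z}).algebraMap_mem r)
    (IntermediateField.mem_adjoin_simple_self _ _) n

section Psi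
variable {F : Type*} [Field F]

/-- all coefficients at nonpositive exponents vanish -/
def LPos (y : LaurentSeries F) : Prop := ∀ n : ℤ, n ≤ 0 → y.coeff n = 0

theorem coeff_single_mul_coe_lt (b : ℤ) (h : PowerSeries F) (n : ℤ) (hn : n < b) :
    (HahnSeries.single b (1 : F) * (h : LaurentSeries F)).coeff n = 0 := by
  rw [HahnSeries.coeff_single_mul, one_mul, PowerSeries.coeff_coe, if_pos (by omega)]

theorem exists_single_mul_coe (y : LaurentSeries F) (b : ℤ) (hy : ∀ n : ℤ, n < b → y.coeff n = 0) :
    ∃ h : PowerSeries F, y = HahnSeries.single b 1 * (h : LaurentSeries F) := by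
  refine ⟨PowerSeries.mk (fun n => y.coeff (b + n)), ?_⟩
  ext n
  rw [HahnSeries.coeff_single_mul, one_mul, PowerSeries.coeff_coe]
  split_ifs with h
  · exact hy n (by omega)
  · rw [PowerSeries.coeff_mk]
    congr 1
    omega

theorem coeff_mul_lt (x y : LaurentSeries F) (a b : ℤ) (hx : ∀ n : ℤ, n < a → x.coeff n = 0)
    (hy : ∀ n : ℤ, n < b → y.coeff n = 0) : ∀ n : ℤ, n < a + b → (x * y).coeff n = 0 := by
  intro n hn
  obtain ⟨h, rfl⟩ := exists_single_mul_coe x a hx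
  obtain ⟨h', rfl⟩ := exists_single_mul_coe y b hy
  have : HahnSeries.single a (1:F) * (h : LaurentSeries F) * (HahnSeries.single b 1 * (h' : LaurentSeries F))
    = HahnSeries.single (a + b) 1 * ((h * h' : PowerSeries F) : LaurentSeries F) := by
    rw [mul_mul_mul_comm, HahnSeries.single_mul_single, mul_one, PowerSeries.coe_mul]
  rw [this]
  exact coeff_single_mul_coe_lt _ _ _ hn

theorem coeff_pow_lt (x : LaurentSeries F) (a : ℤ) (hx : ∀ n : ℤ, n < a → x.coeff n = 0) (N : ℕ) :
    ∀ n : ℤ, n < N * a → (x ^ N).coeff n = 0 := by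
  induction N with
  | zero => intro n hn; simp at hn; simp [HahnSeries.coeff_one, hn.ne]
  | succ N ih =>
    rw [pow_succ]
    intro n hn
    exact coeff_mul_lt _ _ _ _ ih hx n (by push_cast at hn; linarith)

theorem intPart_add (x y : LaurentSeries F) : intPart (x + y) = intPart x + intPart y := by
  ext n
  simp only [intPart, HahnSeries.coeff_add]
  split_ifs <;> simp

theorem intPart_of_pos (x : LaurentSeries F) (h : LPos x) : intPart x = 0 := by
  ext n
  simp only [intPart, HahnSeries.coeff_zero]
  split_ifs with h1
  · exact h n h1
  · rfl

theorem LPos_sub_intPart (x : LaurentSeries F) : LPos (x - intPart x) := by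
  intro n hn
  simp [intPart, hn]

theorem LPos.sub {x y : LaurentSeries F} (hx : LPos x) (hy : LPos y) : LPos (x - y) := by
  intro n hn
  simp [hx n hn, hy n hn]

/-- polynomial in z with given coefficients -/
noncomputable def zpoly {m : ℕ} (c : Fin m → F) : LaurentSeries F :=
  ∑ i, HahnSeries.C (c i) * HahnSeries.single (-1 : ℤ) (1 : F) ^ (i : ℕ)

theorem z_pow (i : ℕ) : HahnSeries.single (-1 : ℤ) (1 : F) ^ i = HahnSeries.single (-(i : ℤ)) 1 := by
  rw [HahnSeries.single_pow]; simp

theorem zpoly_coeff {m : ℕ} (c : Fin m → F) (n : ℤ) :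
    (zpoly c).coeff n = ∑ i : Fin m, if n = -(i : ℤ) then c i else 0 := by
  unfold zpoly
  rw [HahnSeries.coeff_sum]
  refine Finset.sum_congr rfl fun i _ => ?_
  rw [z_pow, HahnSeries.C_apply, HahnSeries.single_mul_single, HahnSeries.coeff_single]
  simp

theorem zpoly_coeff_neg {m : ℕ} (c : Fin m → F) (i : Fin m) :
    (zpoly c).coeff (-(i : ℤ)) = c i := by
  rw [zpoly_coeff]
  rw [Finset.sum_eq_single i]
  · simp
  · intro j _ hj
    rw [if_neg]
    intro h
    apply hj
    ext
    omega
  · simp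

theorem intPart_zpoly {m : ℕ} (c : Fin m → F) : intPart (zpoly c) = zpoly c := by
  ext n
  simp only [intPart]
  split_ifs with h
  · rfl
  · rw [zpoly_coeff, Finset.sum_eq_zero]
    intro i _
    rw [if_neg]
    omega

theorem eq_zpoly {m : ℕ} (y : LaurentSeries F) (hy : ∀ n : ℤ, n < 1 - m → y.coeff n = 0) :
    intPart y = zpoly (fun i : Fin m => y.coeff (-(i : ℤ))) := by
  ext n
  by_cases h : ∃ i : Fin m, n = -(i : ℤ)
  · obtain ⟨i, rfl⟩ := h
    rw [zpoly_coeff_neg]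
    simp [intPart]
  · rw [zpoly_coeff, Finset.sum_eq_zero (fun i _ => if_neg fun hi => h ⟨i, hi⟩)]
    simp only [intPart]
    split_ifs with h0
    · apply hy
      by_contra h1
      exact h ⟨⟨(-n).toNat, by omega⟩, by simp; omega⟩
    · rfl

/-- shift of a power series -/
noncomputable def psShift (f : PowerSeries F) : PowerSeries F :=
  PowerSeries.mk (fun n => PowerSeries.coeff (n + 1) f)

theorem psShift_iter_coeff (f : PowerSeries F) (n k : ℕ) :
    PowerSeries.coeff k (psShift^[n] f) = PowerSeries.coeff (k + n) f := by
  induction n generalizing k with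
  | zero => rfl
  | succ n ih =>
    rw [Function.iterate_succ_apply', psShift, PowerSeries.coeff_mk, ih]
    congr 1; congr 1; ring

theorem psShift_eq (f : PowerSeries F) :
    f = PowerSeries.C (PowerSeries.coeff 0 f) + PowerSeries.X * psShift f := by
  rw [add_comm]
  rw [PowerSeries.coeff_zero_eq_constantCoeff]
  exact PowerSeries.eq_X_mul_shift_add_const f

theorem exists_theta (γ : LaurentSeries F) (hγ : LPos γ) :
    ∃ ψ : PowerSeries F →+* LaurentSeries F, ψ PowerSeries.X = γ ∧
      (∀ c, ψ (PowerSeries.C c) = HahnSeries.C c) ∧ ∀ f n, n < (0:ℤ) → (ψ f).coeff n = 0 := by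
  obtain ⟨a, ha⟩ := exists_single_mul_coe γ 0 (fun n hn => hγ n hn.le)
  have ha' : γ = (a : LaurentSeries F) := by
    rw [ha]; exact one_mul _
  have h0 : PowerSeries.constantCoeff a = 0 := by
    have := hγ 0 le_rfl
    rw [ha', PowerSeries.coeff_coe] at this
    simpa using this
  have hs := PowerSeries.HasSubst.of_constantCoeff_zero' h0
  refine ⟨(HahnSeries.ofPowerSeries ℤ F).comp (PowerSeries.substAlgHom (R := F) hs : PowerSeries F →+* PowerSeries F), ?_, ?_, ?_⟩
  · rw [ha']
    simp [PowerSeries.substAlgHom_X]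
  · intro c
    have : PowerSeries.substAlgHom (R := F) hs (PowerSeries.C c) = PowerSeries.C c :=
      (PowerSeries.substAlgHom (R := F) hs).commutes c
    rw [RingHom.comp_apply]
    simp only [RingHom.coe_coe]
    rw [this, HahnSeries.ofPowerSeries_C]
  · intro f n hn
    rw [RingHom.comp_apply]
    exact (PowerSeries.coeff_coe _ _).trans (if_pos hn)
end Psi

section Digits
variable {F : Type*} [Field F]

/-- the element with digit series f -/
noncomputable def bY {m : ℕ} (β : LaurentSeries F) (ψ : PowerSeries F →+* LaurentSeries F)
    (f : Fin m → PowerSeries F) : LaurentSeries F :=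
  ∑ i : Fin m, HahnSeries.single (-1 : ℤ) (1 : F) ^ (i : ℕ) * β⁻¹ * ψ (f i)

theorem bY_pos {m : ℕ} (β : LaurentSeries F) (hγ : ∀ n : ℤ, n < m → (β⁻¹).coeff n = 0)
    (ψ : PowerSeries F →+* LaurentSeries F) (hψ : ∀ f n, n < (0:ℤ) → (ψ f).coeff n = 0)
    (f : Fin m → PowerSeries F) : LPos (bY β ψ f) := by
  intro n hn
  unfold bY
  rw [HahnSeries.coeff_sum]
  refine Finset.sum_eq_zero fun i _ => ?_
  rw [z_pow, mul_assoc, HahnSeries.coeff_single_mul, one_mul]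
  exact coeff_mul_lt _ _ m 0 hγ (hψ _) _ (by have := i.2; omega)

theorem mul_bY {m : ℕ} (β : LaurentSeries F) (hβ : β ≠ 0)
    (ψ : PowerSeries F →+* LaurentSeries F) (hX : ψ PowerSeries.X = β⁻¹)
    (hC : ∀ c, ψ (PowerSeries.C c) = HahnSeries.C c)
    (f : Fin m → PowerSeries F) :
    β * bY β ψ f = zpoly (fun i => PowerSeries.coeff 0 (f i)) + bY β ψ (fun i => psShift (f i)) := by
  unfold bY zpoly
  rw [Finset.mul_sum, ← Finset.sum_add_distrib]
  refine Finset.sum_congr rfl fun i _ => ?_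
  nth_rewrite 1 [psShift_eq (f i)]
  rw [map_add, map_mul, hX, hC]
  field_simp

theorem betaT_bY {m : ℕ} (β : LaurentSeries F) (hβ : β ≠ 0)
    (hγ : ∀ n : ℤ, n < m → (β⁻¹).coeff n = 0)
    (ψ : PowerSeries F →+* LaurentSeries F) (hX : ψ PowerSeries.X = β⁻¹)
    (hC : ∀ c, ψ (PowerSeries.C c) = HahnSeries.C c)
    (hψ : ∀ f n, n < (0:ℤ) → (ψ f).coeff n = 0)
    (f : Fin m → PowerSeries F) :
    intPart (β * bY β ψ f) = zpoly (fun i => PowerSeries.coeff 0 (f i)) ∧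
    betaT β (bY β ψ f) = bY β ψ (fun i => psShift (f i)) := by
  have h1 : intPart (β * bY β ψ f) = zpoly (fun i => PowerSeries.coeff 0 (f i)) := by
    rw [mul_bY β hβ ψ hX hC, intPart_add, intPart_zpoly, intPart_of_pos _ (bY_pos β hγ ψ hψ _), add_zero]
  refine ⟨h1, ?_⟩
  rw [betaT, h1, mul_bY β hβ ψ hX hC, add_sub_cancel_left]

theorem betaT_iter_bY {m : ℕ} (β : LaurentSeries F) (hβ : β ≠ 0)
    (hγ : ∀ n : ℤ, n < m → (β⁻¹).coeff n = 0)
    (ψ : PowerSeries F →+* LaurentSeries F) (hX : ψ PowerSeries.X = β⁻¹)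
    (hC : ∀ c, ψ (PowerSeries.C c) = HahnSeries.C c)
    (hψ : ∀ f n, n < (0:ℤ) → (ψ f).coeff n = 0)
    (f : Fin m → PowerSeries F) (n : ℕ) :
    (betaT β)^[n] (bY β ψ f) = bY β ψ (fun i => psShift^[n] (f i)) := by
  induction n with
  | zero => rfl
  | succ n ih =>
    rw [Function.iterate_succ_apply', ih, (betaT_bY β hβ hγ ψ hX hC hψ _).2]
    simp_rw [Function.iterate_succ_apply']

theorem betaDigits_bY {m : ℕ} (β : LaurentSeries F) (hβ : β ≠ 0)
    (hγ : ∀ n : ℤ, n < m → (β⁻¹).coeff n = 0)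
    (ψ : PowerSeries F →+* LaurentSeries F) (hX : ψ PowerSeries.X = β⁻¹)
    (hC : ∀ c, ψ (PowerSeries.C c) = HahnSeries.C c)
    (hψ : ∀ f n, n < (0:ℤ) → (ψ f).coeff n = 0)
    (f : Fin m → PowerSeries F) (n : ℕ) :
    betaDigits β (bY β ψ f) n = zpoly (fun i => PowerSeries.coeff n (f i)) := by
  rw [betaDigits, betaT_iter_bY β hβ hγ ψ hX hC hψ, (betaT_bY β hβ hγ ψ hX hC hψ _).1]
  simp_rw [psShift_iter_coeff, zero_add]

theorem bY_inj {m : ℕ} (β : LaurentSeries F) (hβ : β ≠ 0)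
    (hγ : ∀ n : ℤ, n < m → (β⁻¹).coeff n = 0)
    (ψ : PowerSeries F →+* LaurentSeries F) (hX : ψ PowerSeries.X = β⁻¹)
    (hC : ∀ c, ψ (PowerSeries.C c) = HahnSeries.C c)
    (hψ : ∀ f n, n < (0:ℤ) → (ψ f).coeff n = 0)
    (f g : Fin m → PowerSeries F) (h : bY β ψ f = bY β ψ g) : f = g := by
  funext i
  ext n
  have h1 := betaDigits_bY β hβ hγ ψ hX hC hψ f n
  rw [h, betaDigits_bY β hβ hγ ψ hX hC hψ g n] at h1
  have := congrArg (fun y => HahnSeries.coeff y (-(i : ℤ))) h1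
  simp only [zpoly_coeff_neg] at this
  exact this.symm

theorem exists_bY {m : ℕ} (hm : 0 < m) (β : LaurentSeries F) (hβ : β ≠ 0)
    (hβm : ∀ n : ℤ, n < -m → β.coeff n = 0)
    (hγ : ∀ n : ℤ, n < m → (β⁻¹).coeff n = 0)
    (ψ : PowerSeries F →+* LaurentSeries F) (hX : ψ PowerSeries.X = β⁻¹)
    (hC : ∀ c, ψ (PowerSeries.C c) = HahnSeries.C c)
    (hψ : ∀ f n, n < (0:ℤ) → (ψ f).coeff n = 0)
    (y : LaurentSeries F) (hy : LPos y) : ∃ f : Fin m → PowerSeries F, y = bY β ψ f := by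
  have hpos : ∀ n, LPos ((betaT β)^[n] y) := by
    intro n
    cases n with
    | zero => exact hy
    | succ n => rw [Function.iterate_succ_apply']; exact LPos_sub_intPart _
  let f : Fin m → PowerSeries F := fun i => PowerSeries.mk fun n => (β * (betaT β)^[n] y).coeff (-(i:ℤ))
  let D : ℕ → LaurentSeries F := fun n => (betaT β)^[n] y - bY β ψ (fun i => psShift^[n] (f i))
  have hD : ∀ n, D (n + 1) = β * D n := by
    intro n
    have h1 := (betaT_bY β hβ hγ ψ hX hC hψ (fun i => psShift^[n] (f i)))
    have h2 : intPart (β * (betaT β)^[n] y) = zpoly (fun i => PowerSeries.coeff 0 (psShift^[n] (f i))) := by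
      rw [eq_zpoly (m := m)]
      · simp only [psShift_iter_coeff, zero_add, f, PowerSeries.coeff_mk]
      · intro k hk
        exact coeff_mul_lt _ _ (-m) 1 hβm (fun a ha => hpos n a (by omega)) k (by omega)
    have h3 : β * (betaT β)^[n] y = (betaT β)^[n+1] y + zpoly (fun i => PowerSeries.coeff 0 (psShift^[n] (f i))) := by
      rw [← h2, Function.iterate_succ_apply', betaT, sub_add_cancel]
    simp only [D]
    rw [mul_sub, h3, mul_bY β hβ ψ hX hC]
    simp_rw [Function.iterate_succ_apply' psShift]
    ring
  have hDp : ∀ n, LPos (D n) := fun n => (hpos n).sub (bY_pos β hγ ψ hψ _)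
  have hD0 : ∀ n, D 0 = (β⁻¹) ^ n * D n := by
    intro n
    induction n with
    | zero => simp
    | succ n ih =>
      rw [hD, ih, pow_succ]
      field_simp
  refine ⟨f, ?_⟩
  have : D 0 = 0 := by
    ext k
    rw [hD0 (k.toNat)]
    refine coeff_mul_lt _ _ _ 1 (coeff_pow_lt _ _ hγ _) (fun a ha => hDp _ a (by omega)) k ?_
    have : (k.toNat : ℤ) * 1 ≤ (k.toNat : ℤ) * m := by
      apply mul_le_mul_of_nonneg_left _ (by omega)
      exact_mod_cast hm
    omega
  exact sub_eq_zero.1 this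
end Digits

section Phi
variable {F : Type*} [Field F]

theorem psi_inj (β : LaurentSeries F) (hβ : β ≠ 0)
    (ψ : PowerSeries F →+* LaurentSeries F) (hX : ψ PowerSeries.X = β⁻¹) : Function.Injective ψ := by
  rw [injective_iff_map_eq_zero]
  intro f hf
  by_contra h0
  have h1 := PowerSeries.X_pow_order_mul_divXPowOrder (f := f)
  have h2 : IsUnit (PowerSeries.divXPowOrder f) := PowerSeries.isUnit_divided_by_X_pow_order h0
  rw [← h1, map_mul, map_pow, hX] at hf
  rcases mul_eq_zero.1 hf with h | h
  · exact pow_ne_zero _ (inv_ne_zero hβ) h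
  · exact (h2.map ψ).ne_zero h

theorem exists_phi (β : LaurentSeries F) (hβ : β ≠ 0)
    (ψ : PowerSeries F →+* LaurentSeries F) (hX : ψ PowerSeries.X = β⁻¹) :
    ∃ φ : LaurentSeries F →+* LaurentSeries F, ∀ f : PowerSeries F, φ (f : LaurentSeries F) = ψ f := by
  refine ⟨IsFractionRing.lift (A := PowerSeries F) (psi_inj β hβ ψ hX), fun f => ?_⟩
  exact IsFractionRing.lift_algebraMap (A := PowerSeries F) (psi_inj β hβ ψ hX) f

theorem phi_single (β : LaurentSeries F)
    (ψ : PowerSeries F →+* LaurentSeries F) (hX : ψ PowerSeries.X = β⁻¹)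
    (φ : LaurentSeries F →+* LaurentSeries F) (hφ : ∀ f : PowerSeries F, φ (f : LaurentSeries F) = ψ f) :
    φ (HahnSeries.single 1 1) = β⁻¹ := by
  rw [← hX, ← hφ, PowerSeries.coe_X]

theorem clear_denom (g : LaurentSeries F) : ∃ N : ℕ, ∀ n, N ≤ n → ∃ h : PowerSeries F,
    HahnSeries.single (1:ℤ) (1:F) ^ n * g = (h : LaurentSeries F) := by
  refine ⟨(-g.order).toNat, fun n hn => ?_⟩
  obtain ⟨h, hh⟩ := exists_single_mul_coe (HahnSeries.single (1:ℤ) (1:F) ^ n * g) 0 (by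
    intro k hk
    rw [HahnSeries.single_pow, one_pow, HahnSeries.coeff_single_mul, one_mul]
    apply HahnSeries.coeff_eq_zero_of_lt_order
    simp
    omega)
  exact ⟨h, hh.trans (one_mul _)⟩

theorem phi_span {m : ℕ} (hm : 0 < m) (β : LaurentSeries F) (hβ : β ≠ 0)
    (hβm : ∀ n : ℤ, n < -m → β.coeff n = 0)
    (hγ : ∀ n : ℤ, n < m → (β⁻¹).coeff n = 0)
    (ψ : PowerSeries F →+* LaurentSeries F) (hX : ψ PowerSeries.X = β⁻¹)
    (hC : ∀ c, ψ (PowerSeries.C c) = HahnSeries.C c)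
    (hψ : ∀ f n, n < (0:ℤ) → (ψ f).coeff n = 0)
    (φ : LaurentSeries F →+* LaurentSeries F) (hφ : ∀ f : PowerSeries F, φ (f : LaurentSeries F) = ψ f)
    (y : LaurentSeries F) : ∃ g : Fin m → LaurentSeries F,
      y = ∑ i : Fin m, φ (g i) * HahnSeries.single (-1 : ℤ) (1 : F) ^ (i : ℕ) := by
  let N := (1 - y.order).toNat
  have hp : LPos ((β⁻¹) ^ N * y) := by
    intro n hn
    refine coeff_mul_lt _ _ _ y.order (coeff_pow_lt _ _ hγ N)
      (fun a ha => HahnSeries.coeff_eq_zero_of_lt_order ha) n ?_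
    have : (N : ℤ) * 1 ≤ (N : ℤ) * m := by
      apply mul_le_mul_of_nonneg_left _ (by omega)
      exact_mod_cast hm
    omega
  obtain ⟨f, hf⟩ := exists_bY hm β hβ hβm hγ ψ hX hC hψ _ hp
  refine ⟨fun i => (HahnSeries.single (1:ℤ) (1:F))⁻¹ ^ N * HahnSeries.single 1 1 * (f i : LaurentSeries F), ?_⟩
  have : y = β ^ N * ((β⁻¹) ^ N * y) := by
    rw [← mul_assoc, ← mul_pow, mul_inv_cancel₀ hβ, one_pow, one_mul]
  rw [this, hf, bY, Finset.mul_sum]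
  refine Finset.sum_congr rfl fun i _ => ?_
  rw [map_mul, map_mul, map_pow, map_inv₀, phi_single β ψ hX φ hφ, hφ, inv_inv]
  ring

theorem phi_unique {m : ℕ} (β : LaurentSeries F) (hβ : β ≠ 0)
    (hγ : ∀ n : ℤ, n < m → (β⁻¹).coeff n = 0)
    (ψ : PowerSeries F →+* LaurentSeries F) (hX : ψ PowerSeries.X = β⁻¹)
    (hC : ∀ c, ψ (PowerSeries.C c) = HahnSeries.C c)
    (hψ : ∀ f n, n < (0:ℤ) → (ψ f).coeff n = 0)
    (φ : LaurentSeries F →+* LaurentSeries F) (hφ : ∀ f : PowerSeries F, φ (f : LaurentSeries F) = ψ f)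
    (e : Fin m → LaurentSeries F) (f : Fin m → PowerSeries F)
    (h : bY β ψ f = ∑ i : Fin m, φ (e i) * HahnSeries.single (-1 : ℤ) (1 : F) ^ (i : ℕ)) (i : Fin m) :
    e i = HahnSeries.single 1 1 * (f i : LaurentSeries F) := by
  choose N hN using fun i => clear_denom (e i)
  set n := ∑ i, N i
  choose g hg using fun i => hN i n (Finset.single_le_sum (f := N) (by simp) (Finset.mem_univ i))
  have hs := phi_single β ψ hX φ hφ
  have h1 : bY β ψ (fun i => PowerSeries.X ^ (n + 1) * f i) = bY β ψ g := by
    have : bY β ψ g = β⁻¹ ^ (n + 1) * bY β ψ f := by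
      rw [h, bY, Finset.mul_sum]
      refine Finset.sum_congr rfl fun i _ => ?_
      rw [← hφ, ← hg, map_mul, map_pow, hs]
      ring
    rw [this, bY, bY, Finset.mul_sum]
    refine Finset.sum_congr rfl fun i _ => ?_
    rw [map_mul, map_pow, hX]
    ring
  have h2 := congrFun (bY_inj β hβ hγ ψ hX hC hψ _ _ h1) i
  have h3 := hg i
  rw [← h2] at h3
  have h4 : HahnSeries.single (1:ℤ) (1:F) ≠ 0 := HahnSeries.single_ne_zero one_ne_zero
  apply mul_left_cancel₀ (pow_ne_zero n h4)
  rw [h3, PowerSeries.coe_mul, PowerSeries.coe_pow, PowerSeries.coe_X]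
  ring
end Phi

open Polynomial in
theorem eval₂_swap_hom {F K : Type*} [Field F] [Field K] (f : F →+* K) (x y : K) (P : F[X][X]) :
    eval₂ (eval₂RingHom f y) x (Bivariate.swap P) = eval₂ (eval₂RingHom f x) y P := by
  have : ((eval₂RingHom (eval₂RingHom f y) x).comp (Bivariate.swap (R := F) : F[X][X] →+* F[X][X]))
      = eval₂RingHom (eval₂RingHom f x) y := by
    apply Polynomial.ringHom_ext'
    · apply Polynomial.ringHom_ext'
      · ext c
        simp [Bivariate.swap_C_C]
      · simp [Bivariate.swap_X]
    · simp [Bivariate.swap_Y]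
  exact congrArg (fun g : F[X][X] →+* K => g P) this

section Final
open Polynomial
variable {F : Type*} [Field F]

theorem rf_coe_C (c : F) : algebraMap (RatFunc F) (LaurentSeries F) (RatFunc.C c) = HahnSeries.C c := by
  rw [← RatFunc.algebraMap_C]
  refine (RatFunc.coe_coe (C c)).symm.trans ?_
  rw [Polynomial.coe_C, PowerSeries.coe_C]

theorem algMap_poly_ls : algebraMap F[X] (LaurentSeries F) =
    eval₂RingHom HahnSeries.C (HahnSeries.single 1 1) := by
  apply Polynomial.ringHom_ext'
  · ext1 c
    simp only [RingHom.comp_apply, coe_eval₂RingHom, eval₂_C]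
    rw [IsScalarTower.algebraMap_apply F[X] (RatFunc F) (LaurentSeries F), RatFunc.algebraMap_C, rf_coe_C]
  · simp only [coe_eval₂RingHom, eval₂_X]
    rw [IsScalarTower.algebraMap_apply F[X] (RatFunc F) (LaurentSeries F), RatFunc.algebraMap_X,
      RatFunc.coe_X]

theorem z_inv : (HahnSeries.single (1 : ℤ) (1 : F))⁻¹ = HahnSeries.single (-1) 1 := by
  rw [inv_eq_iff_eq_inv, eq_comm]
  apply inv_eq_of_mul_eq_one_left
  rw [HahnSeries.single_mul_single]
  simp

theorem exchange (γ : LaurentSeries F) (hγ : IsAlgebraic (RatFunc F) γ)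
    (φ : LaurentSeries F →+* LaurentSeries F) (hφX : φ (HahnSeries.single 1 1) = γ)
    (hφC : ∀ c, φ (HahnSeries.C c) = HahnSeries.C c) :
    ∃ Q : (RatFunc F)[X], Q ≠ 0 ∧
      Q.eval₂ (φ.comp (algebraMap (RatFunc F) (LaurentSeries F))) (HahnSeries.single (-1 : ℤ) (1 : F)) = 0 := by
  rw [← IsFractionRing.isAlgebraic_iff F[X] (RatFunc F) (LaurentSeries F)] at hγ
  obtain ⟨P, hP0, hP⟩ := hγ
  have h1 : eval₂ (eval₂RingHom HahnSeries.C γ) (HahnSeries.single (1:ℤ) (1:F)) (Bivariate.swap P) = 0 := by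
    rw [eval₂_swap_hom, ← algMap_poly_ls]
    exact hP
  have hcomp : (φ.comp (algebraMap (RatFunc F) (LaurentSeries F))).comp (algebraMap F[X] (RatFunc F))
      = eval₂RingHom HahnSeries.C γ := by
    rw [RingHom.comp_assoc, ← IsScalarTower.algebraMap_eq, algMap_poly_ls]
    apply Polynomial.ringHom_ext'
    · ext1 c
      simpa using hφC c
    · simp [hφX]
  refine ⟨((Bivariate.swap P).map (algebraMap F[X] (RatFunc F))).reverse, ?_, ?_⟩
  · rw [Ne, reverse_eq_zero, Polynomial.map_eq_zero_iff (IsFractionRing.injective F[X] (RatFunc F))]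
    simpa using hP0
  · have h4 : HahnSeries.single (1:ℤ) (1:F) ≠ 0 := HahnSeries.single_ne_zero one_ne_zero
    let _ := invertibleOfNonzero h4
    have := (eval₂_reverse_eq_zero_iff (φ.comp (algebraMap (RatFunc F) (LaurentSeries F)))
      (HahnSeries.single (1:ℤ) (1:F)) ((Bivariate.swap P).map (algebraMap F[X] (RatFunc F)))).2 (by
        rw [eval₂_map, hcomp, h1])
    rwa [invOf_eq_inv, z_inv] at this

theorem algMap_mem (S : Subfield (LaurentSeries F)) (hc : ∀ c, HahnSeries.C c ∈ S)
    (hz : HahnSeries.single (-1 : ℤ) (1 : F) ∈ S) (r : RatFunc F) :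
    algebraMap (RatFunc F) (LaurentSeries F) r ∈ S := by
  have hx : HahnSeries.single (1 : ℤ) (1 : F) ∈ S := by
    rw [← z_inv] at hz
    simpa using S.inv_mem hz
  have hp : ∀ f : F[X], algebraMap F[X] (LaurentSeries F) f ∈ S := by
    intro f
    rw [algMap_poly_ls, coe_eval₂RingHom, eval₂_eq_sum_range]
    exact sum_mem fun i _ => mul_mem (hc _) (pow_mem hx _)
  obtain ⟨a, b, hb, rfl⟩ := IsFractionRing.div_surjective (A := F[X]) r
  rw [map_div₀, ← IsScalarTower.algebraMap_apply, ← IsScalarTower.algebraMap_apply]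
  exact div_mem (hp _) (hp _)

theorem isAlgebraic_algMap_z : IsAlgebraic (RatFunc F) (HahnSeries.single (-1 : ℤ) (1 : F)) := by
  rw [← z_inv, ← RatFunc.coe_X]
  exact (isAlgebraic_algebraMap (A := LaurentSeries F) (RatFunc.X : RatFunc F)).inv

theorem isAlgebraic_C (c : F) : IsAlgebraic (RatFunc F) (HahnSeries.C c : LaurentSeries F) := by
  rw [← rf_coe_C]
  exact isAlgebraic_algebraMap _

theorem isAlgebraic_zpoly {m : ℕ} (c : Fin m → F) : IsAlgebraic (RatFunc F) (zpoly c) := by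
  unfold zpoly
  rw [← mem_algebraicClosure_iff]
  refine sum_mem fun i _ => mul_mem ?_ (pow_mem ?_ _)
  · exact mem_algebraicClosure_iff.2 (isAlgebraic_C _)
  · exact mem_algebraicClosure_iff.2 isAlgebraic_algMap_z
end Final

/-- If `β ∈ 𝔽_q((1/z))` has positive degree (`β.order < 0`) and is algebraic
over `𝔽_q(z)`, then for every `x ∈ 𝔽_q[[1/z]]` algebraic over `𝔽_q(z)`, the
`β`-expansion `d_β(x)` is `p`-automatic. -/
theorem betaDigits_automatic_of_algebraic
    (p : ℕ) [Fact p.Prime] (F : Type*) [Field F] [Fintype F] [CharP F p]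
    (β : LaurentSeries F) (hβ : β.order < 0)
    (hβalg : IsAlgebraic (RatFunc F) β)
    (x : LaurentSeries F) (hx : 0 ≤ x.order)
    (hxalg : IsAlgebraic (RatFunc F) x) :
    IsKAutomatic p (betaDigits β x) := by
  have hp : p.Prime := Fact.out
  have hβ0 : β ≠ 0 := by rintro rfl; simp at hβ
  obtain ⟨m, hm⟩ : ∃ m : ℕ, β.order = -m := ⟨(-β.order).toNat, by omega⟩
  have hm0 : 0 < m := by omega
  have hβm : ∀ n : ℤ, n < -m → β.coeff n = 0 := fun n hn =>
    HahnSeries.coeff_eq_zero_of_lt_order (by omega)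
  have hγo : (β⁻¹).order = m := by
    have := HahnSeries.order_mul hβ0 (inv_ne_zero hβ0)
    rw [mul_inv_cancel₀ hβ0, HahnSeries.order_one] at this
    omega
  have hγ : ∀ n : ℤ, n < m → (β⁻¹).coeff n = 0 := fun n hn =>
    HahnSeries.coeff_eq_zero_of_lt_order (by omega)
  obtain ⟨ψ, hX, hC, hψ⟩ := exists_theta β⁻¹ (fun n hn => hγ n (by omega))
  obtain ⟨φ, hφ⟩ := exists_phi β hβ0 ψ hX
  have hφX := phi_single β ψ hX φ hφ
  have hφC : ∀ c, φ (HahnSeries.C c) = HahnSeries.C c := by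
    intro c
    have h := hφ (PowerSeries.C c)
    rwa [hC, PowerSeries.coe_C] at h
  -- the shifted point
  set y := betaT β x with hy
  have hypos : LPos y := LPos_sub_intPart _
  have hb0 : ∃ (M : ℕ) (c : Fin M → F), intPart (β * x) = zpoly c := by
    refine ⟨m + 1, _, eq_zpoly (m := m + 1) _ ?_⟩
    intro n hn
    exact coeff_mul_lt _ _ (-m) 0 hβm
      (fun a ha => HahnSeries.coeff_eq_zero_of_lt_order (by omega)) n (by push_cast at hn; omega)
  have hyalg : IsAlgebraic (RatFunc F) y := by
    obtain ⟨M, c, hc⟩ := hb0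
    rw [hy, betaT, hc]
    exact (hβalg.mul hxalg).sub (isAlgebraic_zpoly c)
  have hsep := isSeparable_of_alg p y hyalg
  have : CharP (RatFunc F) p := charP_of_injective_algebraMap (algebraMap F (RatFunc F)).injective p
  have : ExpChar (RatFunc F) p := ExpChar.prime hp
  obtain ⟨e, he, hye⟩ := lemD_hom (k := RatFunc F) φ p (HahnSeries.single (-1 : ℤ) (1 : F)) y m
    (exchange β⁻¹ hβalg.inv φ hφX hφC)
    ((minpoly (RatFunc F) y).map (algebraMap (RatFunc F) (LaurentSeries F)))
    (Polynomial.Separable.map hsep)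
    (by rw [Polynomial.eval_map_algebraMap, minpoly.aeval])
    (by
      intro S hS hzS n
      rw [Polynomial.coeff_map]
      refine algMap_mem S (fun c => ?_) hzS _
      rw [← hφC, ← rf_coe_C]
      exact hS _)
    (phi_span hm0 β hβ0 hβm hγ ψ hX hC hψ φ hφ)
  obtain ⟨f, hf⟩ := exists_bY hm0 β hβ0 hβm hγ ψ hX hC hψ y hypos
  have hef := phi_unique β hβ0 hγ ψ hX hC hψ φ hφ e f (by rw [← hf, hye])
  let s : Option (Fin m) → LaurentSeries F := fun o => o.elim 1 e
  have hs : ∀ o, IsAlgebraic (RatFunc F) (s o) := by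
    intro o
    cases o with
    | none => exact isAlgebraic_one
    | some i => exact he i
  have hfin := automatic_comp p (fun o => fun n : ℕ => (s o).coeff (n : ℤ)) (fun o => christol p (s o) (hs o))
    (fun v => HahnSeries.C (v none) * intPart (β * x) + zpoly (fun i : Fin m => v (some i)))
  convert hfin using 1
  funext n
  cases n with
  | zero =>
    have : (zpoly fun i : Fin m => (e i).coeff 0) = 0 := by
      have h0 : ∀ i, (e i).coeff 0 = 0 := fun i => by
        rw [hef i]
        exact coeff_single_mul_coe_lt _ _ _ (by norm_num)
      simp [zpoly, h0]
    simp [betaDigits, s, this]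
  | succ n =>
    have h1 : betaDigits β x (n + 1) = betaDigits β y n := by
      simp [betaDigits, Function.iterate_succ_apply, hy]
    rw [h1, hf, betaDigits_bY β hβ0 hγ ψ hX hC hψ f n]
    have h2 : ∀ i, (e i).coeff ((n + 1 : ℕ) : ℤ) = PowerSeries.coeff n (f i) := fun i => by
      rw [hef i, HahnSeries.coeff_single_mul, one_mul]
      simp [PowerSeries.coeff_coe]
    have h3 : (1 : LaurentSeries F).coeff ((n + 1 : ℕ) : ℤ) = 0 := by
      rw [HahnSeries.coeff_one, if_neg]
      omega
    simp only [s, Option.elim_none, Option.elim_some, h2, h3]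
    simp
end

section
/- Let P(z) ∈ 𝔽_q[z] be irreducible of degree d > 0 and let Γ = {c₀ + c₁z + ⋯ + c_{d−1}z^{d−1} : c₀, …, c_{d−1} ∈ 𝔽_q} be the set of polynomials over 𝔽_q of degree less than d. Then Γ is a complete set of representatives modulo P(z), and for every element x of the P-adic completion of 𝔽_q(z), writing its unique expansion x = ∑_{n≥m} a_n P(z)ⁿ with digits a_n ∈ Γ, x is algebraic over 𝔽_q(z) if and only if the sequence {a_n}_{n≥m} is p-automatic. -/
set_option synthInstance.maxHeartbeats 1000000
set_option maxHeartbeats 1000000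

/-!
Expansions in the `P`-adic completion of `𝔽_q(z)`: for an irreducible
`P ∈ 𝔽_q[z]` of degree `d > 0`, the `P`-adic completion of the rational function
field `𝔽_q(z) = RatFunc F` is modelled as the adic completion of `RatFunc F` at
the height-one prime `(P)` of `𝔽_q[z]`, which carries a canonical
`ℤₘ₀`-valuation (normalized so that `v(P) = ofAdd (-1)`, valuation ring
`A_v = {x | v x ≤ 1}`, and `P·A_v = {x | v x ≤ v P}`).
-/

open IsDedekindDomain

/-- The height-one prime `(P)` of `F[z]` attached to an irreducible polynomial `P`. -/
noncomputable def primeOfIrreducible {F : Type*} [Field F] (P : Polynomial F)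
    (hP : Irreducible P) : HeightOneSpectrum (Polynomial F) :=
  ⟨Ideal.span {P}, (Ideal.span_singleton_prime hP.ne_zero).mpr hP.prime,
    by simp [Ideal.span_singleton_eq_bot, hP.ne_zero]⟩

/-- The canonical map `𝔽_q[z] → 𝔽_q(z) → K_v` into the `P`-adic completion. -/
noncomputable def toAdicCompletion {F : Type*} [Field F] (P : Polynomial F)
    (hP : Irreducible P) (Q : Polynomial F) :
    (primeOfIrreducible P hP).adicCompletion (RatFunc F) :=
  algebraMap (RatFunc F) ((primeOfIrreducible P hP).adicCompletion (RatFunc F))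
    (algebraMap (Polynomial F) (RatFunc F) Q)

section ChristolCart
open PowerSeries

theorem ps_coeff_pow_p (p : ℕ) [Fact p.Prime] {F : Type*} [Field F] [CharP F p]
    (w : PowerSeries F) (n : ℕ) :
    coeff n (w ^ p) = if p ∣ n then (coeff (n / p) w) ^ p else 0 := by
  haveI : ExpChar F p := ExpChar.prime Fact.out
  have hp : p ≠ 0 := (Fact.out : p.Prime).ne_zero
  have h : PowerSeries.map (frobenius F p) (PowerSeries.expand p hp w) = w ^ p :=
    MvPowerSeries.map_frobenius_expand p hp (f := w)
  rw [← h, PowerSeries.coeff_map, PowerSeries.coeff_expand]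
  split_ifs <;> simp [frobenius_def, hp]

/-- Cartier operator on power series. -/
noncomputable def cart (p : ℕ) [Fact p.Prime] {F : Type*} [Field F] [Finite F] [CharP F p]
    (j : ℕ) (u : PowerSeries F) : PowerSeries F :=
  haveI : ExpChar F p := ExpChar.prime Fact.out
  PowerSeries.mk fun n => (frobeniusEquiv F p).symm (coeff (n * p + j) u)

variable (p : ℕ) [Fact p.Prime] {F : Type*} [Field F] [Finite F] [CharP F p]

theorem coeff_cart_pow (j n : ℕ) (u : PowerSeries F) :
    (coeff n (cart p j u)) ^ p = coeff (n * p + j) u := by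
  haveI : ExpChar F p := ExpChar.prime Fact.out
  simp [cart]

theorem froot_inj {a b : F} (h : a ^ p = b ^ p) : a = b := by
  haveI : ExpChar F p := ExpChar.prime Fact.out
  exact frobenius_inj F p h

theorem coeff_X_pow_mul_pow (j n i : ℕ) (hj : j < p) (hi : i < p) (w : PowerSeries F) :
    coeff (n * p + i) (X ^ j * w ^ p) = if i = j then (coeff n w) ^ p else 0 := by
  have hp : 0 < p := (Fact.out : p.Prime).pos
  rw [PowerSeries.coeff_X_pow_mul', ps_coeff_pow_p]
  split_ifs with h1 h2 h3 h4 h5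
  · subst h3; simp [hp]
  · exfalso
    obtain ⟨k, hk⟩ := h2
    have : (n * p + i) % p = (p * k + j) % p := by congr 1; omega
    simp [Nat.mod_eq_of_lt hi, Nat.mod_eq_of_lt hj] at this
    exact h3 this
  · exfalso; subst h4; apply h2; simp
  · rfl
  · exfalso; omega
  · rfl

theorem cart_sum (w : ℕ → PowerSeries F) (i : ℕ) (hi : i < p) :
    cart p i (∑ j ∈ Finset.range p, X ^ j * w j ^ p) = w i := by
  ext n
  apply froot_inj p
  rw [coeff_cart_pow, map_sum]
  rw [Finset.sum_eq_single i]
  · rw [coeff_X_pow_mul_pow p i n i hi hi]; simp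
  · intro b hb hbi
    rw [coeff_X_pow_mul_pow p b n i (Finset.mem_range.1 hb) hi, if_neg (Ne.symm hbi)]
  · intro h; simp [hi] at h

theorem cart_decomp (u : PowerSeries F) :
    u = ∑ j ∈ Finset.range p, X ^ j * (cart p j u) ^ p := by
  have hp : 0 < p := (Fact.out : p.Prime).pos
  ext m
  obtain ⟨n, i, hi, rfl⟩ : ∃ n i, i < p ∧ m = n * p + i :=
    ⟨m / p, m % p, Nat.mod_lt _ hp, by rw [mul_comm, Nat.div_add_mod]⟩
  rw [← coeff_cart_pow p i n, ← coeff_cart_pow p i n, cart_sum p _ i hi]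

theorem cart_add (i : ℕ) (u v : PowerSeries F) : cart p i (u + v) = cart p i u + cart p i v := by
  ext n; simp [cart]

theorem cart_zero (i : ℕ) : cart p i (0 : PowerSeries F) = 0 := by
  ext n; simp [cart]

theorem cart_finsum {ι : Type*} (s : Finset ι) (f : ι → PowerSeries F) (i : ℕ) :
    cart p i (∑ a ∈ s, f a) = ∑ a ∈ s, cart p i (f a) := by
  classical
  induction s using Finset.induction_on with
  | empty => simp [cart_zero]
  | insert a s ha ih => simp [Finset.sum_insert ha, cart_add, ih]

theorem cart_mul_pow (i : ℕ) (hi : i < p) (u y : PowerSeries F) :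
    cart p i (u * y ^ p) = cart p i u * y := by
  conv_lhs => rw [cart_decomp p u, Finset.sum_mul]
  have : ∀ j ∈ Finset.range p, X ^ j * cart p j u ^ p * y ^ p = X ^ j * (cart p j u * y) ^ p := by
    intro j _; ring
  rw [Finset.sum_congr rfl this, cart_sum p _ i hi]

/-- degree bound -/
def PB (N : ℕ) (u : PowerSeries F) : Prop := ∀ n, N < n → coeff n u = 0


end ChristolCart

section ChristolFinite
open PowerSeries

variable (p : ℕ) [Fact p.Prime] {F : Type*} [Field F] [Finite F] [CharP F p]

theorem PB_mul {N M : ℕ} {u v : PowerSeries F} (hu : PB N u) (hv : PB M v) :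
    PB (N + M) (u * v) := by
  intro n hn
  rw [coeff_mul]
  apply Finset.sum_eq_zero
  rintro ⟨a, b⟩ hab
  rw [Finset.HasAntidiagonal.mem_antidiagonal] at hab
  simp only at hab ⊢
  by_cases h : N < a
  · rw [hu a h, zero_mul]
  · rw [hv b (by omega), mul_zero]

theorem PB_mono {N M : ℕ} (h : N ≤ M) {u : PowerSeries F} (hu : PB N u) : PB M u :=
  fun n hn => hu n (by omega)

theorem PB_sum {N : ℕ} {ι : Type*} (s : Finset ι) (f : ι → PowerSeries F)
    (h : ∀ i ∈ s, PB N (f i)) : PB N (∑ i ∈ s, f i) := by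
  intro n hn
  rw [map_sum]
  exact Finset.sum_eq_zero fun i hi => h i hi n hn

theorem PB_pow {N : ℕ} {u : PowerSeries F} (hu : PB N u) (k : ℕ) : PB (k * N) (u ^ k) := by
  induction k with
  | zero =>
    intro n hn
    rw [pow_zero, coeff_one, if_neg (by omega)]
  | succ k ih => rw [pow_succ, Nat.succ_mul]; exact PB_mul ih hu

theorem PB_poly (Q : Polynomial F) : PB Q.natDegree (Q : PowerSeries F) := by
  intro n hn
  rw [Polynomial.coeff_coe]
  exact Polynomial.coeff_eq_zero_of_natDegree_lt hn

theorem PB_cart {N M : ℕ} (h : M < (N + 1) * p) (j : ℕ) {u : PowerSeries F} (hu : PB M u) :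
    PB N (cart p j u) := by
  intro n hn
  have hp : (Fact.out : p.Prime) = (Fact.out : p.Prime) := rfl
  apply froot_inj p
  rw [coeff_cart_pow, zero_pow (Fact.out : p.Prime).ne_zero]
  apply hu
  have : (N + 1) * p ≤ n * p := Nat.mul_le_mul_right _ hn
  omega

theorem PB_finite (N : ℕ) : {u : PowerSeries F | PB N u}.Finite := by
  apply Set.Finite.of_finite_image (f := fun u => fun i : Fin (N + 1) => coeff (i : ℕ) u)
    (Set.toFinite _)
  intro u hu v hv h
  ext n
  by_cases hn : n < N + 1
  · exact congrFun h ⟨n, hn⟩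
  · rw [hu n (by omega), hv n (by omega)]

theorem finite_closed {ι : Type*} [Finite ι] (w : ι → PowerSeries F) (C : Polynomial F)
    (hC : C ≠ 0)
    (h : ∀ a, C • w a ∈ Submodule.span (Polynomial F) (Set.range fun b => w b ^ p)) (a : ι) :
    ∃ S : Set (PowerSeries F), S.Finite ∧ w a ∈ S ∧ ∀ u ∈ S, ∀ j < p, cart p j u ∈ S := by
  classical
  cases nonempty_fintype ι
  have hp2 : 2 ≤ p := (Fact.out : p.Prime).two_le
  simp only [Submodule.mem_span_range_iff_exists_fun] at h
  choose M hM using h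
  have smul_eq : ∀ (Q : Polynomial F) (u : PowerSeries F), Q • u = (Q : PowerSeries F) * u := by
    intro Q u; rw [Algebra.smul_def]; rfl
  simp only [smul_eq] at hM
  have hC' : (C : PowerSeries F) ≠ 0 := by simpa using hC
  obtain ⟨D, hDC, hDM⟩ : ∃ D, PB D (C : PowerSeries F) ∧
      ∀ a b, PB D (M a b : PowerSeries F) := by
    refine ⟨C.natDegree + ∑ a, ∑ b, (M a b).natDegree, PB_mono (by omega) (PB_poly C), ?_⟩
    intro a b
    refine PB_mono ?_ (PB_poly _)
    calc (M a b).natDegree ≤ ∑ b, (M a b).natDegree :=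
          Finset.single_le_sum (f := fun b => (M a b).natDegree) (fun _ _ => Nat.zero_le _)
            (Finset.mem_univ b)
      _ ≤ ∑ a, ∑ b, (M a b).natDegree :=
          Finset.single_le_sum (f := fun a => ∑ b, (M a b).natDegree) (fun _ _ => Nat.zero_le _)
            (Finset.mem_univ a)
      _ ≤ _ := by omega
  set N := p * D with hN
  refine ⟨{u | ∃ H : ι → PowerSeries F, (∀ b, PB N (H b)) ∧
    (C : PowerSeries F) * u = ∑ b, H b * w b}, ?_, ?_, ?_⟩
  · apply Set.Finite.of_finite_image (f := fun u => (C : PowerSeries F) * u)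
    · apply Set.Finite.subset
        (Set.Finite.image (fun H : ι → PowerSeries F => ∑ b, H b * w b)
          (Set.Finite.pi' (t := fun _ : ι => {u : PowerSeries F | PB N u}) fun _ => PB_finite N))
      rintro _ ⟨u, ⟨H, hH, hu⟩, rfl⟩
      exact ⟨H, hH, hu.symm⟩
    · intro u _ v _ huv
      exact mul_left_cancel₀ hC' huv
  · refine ⟨fun b => if b = a then (C : PowerSeries F) else 0, ?_, ?_⟩
    · intro b
      dsimp only
      split_ifs
      · exact PB_mono (by nlinarith) hDC
      · intro n _; simp
    · simp
  · rintro u ⟨H, hH, hu⟩ j hj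
    refine ⟨fun b => cart p j ((C : PowerSeries F) ^ (p - 2) * ∑ a, H a * M a b), ?_, ?_⟩
    · intro b
      apply PB_cart p (M := (p - 2) * D + (N + D))
      · obtain ⟨r, rfl⟩ := Nat.exists_eq_add_of_le hp2
        simp only [Nat.add_sub_cancel_left]
        nlinarith [Nat.zero_le (r * r * D), Nat.zero_le (r * D)]
      · exact PB_mul (PB_pow hDC _) (PB_sum _ _ fun a _ => PB_mul (hH a) (hDM a b))
    · have key : u * (C : PowerSeries F) ^ p =
          ∑ b, ((C : PowerSeries F) ^ (p - 2) * ∑ a, H a * M a b) * w b ^ p := by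
        have e : (C : PowerSeries F) ^ p = C ^ (p - 2) * C * C := by
          rw [mul_assoc, ← pow_two, ← pow_add]; congr 1; omega
        calc u * (C : PowerSeries F) ^ p = C ^ (p - 2) * C * (C * u) := by rw [e]; ring
          _ = C ^ (p - 2) * ∑ a, H a * (C * w a) := by
            rw [hu, mul_assoc, Finset.mul_sum]
            congr 1
            exact Finset.sum_congr rfl fun a _ => by ring
          _ = C ^ (p - 2) * ∑ a, ∑ b, H a * (M a b * w b ^ p) := by
            congr 1
            exact Finset.sum_congr rfl fun a _ => by rw [← hM, Finset.mul_sum]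
          _ = _ := by
            rw [Finset.sum_comm, Finset.mul_sum]
            refine Finset.sum_congr rfl fun b _ => ?_
            rw [mul_assoc, Finset.sum_mul]
            congr 1
            exact Finset.sum_congr rfl fun a _ => by ring
      rw [mul_comm, ← cart_mul_pow p j hj, key, cart_finsum]
      exact Finset.sum_congr rfl fun b _ => by rw [cart_mul_pow p j hj]

theorem aut_of_closed (u : ℕ → F) (S : Set (PowerSeries F)) (hS : S.Finite)
    (hu : PowerSeries.mk u ∈ S) (hc : ∀ u ∈ S, ∀ j < p, cart p j u ∈ S) :
    IsKAutomatic p u := by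
  have hp : 0 < p := (Fact.out : p.Prime).pos
  have hfin : (Set.image2 (fun (τ : F → F) (g : PowerSeries F) => fun n => τ (coeff n g))
    Set.univ S).Finite := Set.Finite.image2 _ Set.finite_univ hS
  apply hfin.subset
  rintro c ⟨i, j, hj, rfl⟩
  induction i generalizing j with
  | zero =>
    refine ⟨id, trivial, _, hu, ?_⟩
    have : j = 0 := by simpa using hj
    subst this
    simp
  | succ i ih =>
    have hpi : 0 < p ^ i := pow_pos hp i
    obtain ⟨τ, -, g, hg, e⟩ := ih (j % p ^ i) (Nat.mod_lt _ hpi)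
    have hlt : j / p ^ i < p := by
      rw [Nat.div_lt_iff_lt_mul hpi, mul_comm, ← pow_succ]; exact hj
    refine ⟨fun x => τ (x ^ p), trivial, _, hc g hg (j / p ^ i) hlt, ?_⟩
    funext n
    have e' := congrFun e (n * p + j / p ^ i)
    simp only at e' ⊢
    rw [coeff_cart_pow, e']
    congr 1
    conv_rhs => rw [← Nat.div_add_mod j (p ^ i)]
    ring

theorem closed_of_aut (u : ℕ → F) (hu : IsKAutomatic p u) :
    ∃ S : Set (PowerSeries F), S.Finite ∧ PowerSeries.mk u ∈ S ∧
      ∀ u ∈ S, ∀ j < p, cart p j u ∈ S := by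
  have : ExpChar F p := ExpChar.prime Fact.out
  have hp : 0 < p := (Fact.out : p.Prime).pos
  refine ⟨_, Set.Finite.image2 (fun (τ : F → F) (c : ℕ → F) => PowerSeries.mk fun n => τ (c n))
    (Set.finite_univ (α := F → F)) hu, ⟨id, trivial, u, ⟨0, 0, by simp, by simp⟩, rfl⟩, ?_⟩
  rintro _ ⟨τ, -, _, ⟨i, j0, hj0, rfl⟩, rfl⟩ j hj
  refine ⟨fun x => (frobeniusEquiv F p).symm (τ x), trivial, _,
    ⟨i + 1, j * p ^ i + j0, ?_, rfl⟩, ?_⟩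
  · calc j * p ^ i + j0 < j * p ^ i + p ^ i := by omega
      _ = (j + 1) * p ^ i := by ring
      _ ≤ p * p ^ i := Nat.mul_le_mul_right _ hj
      _ = p ^ (i + 1) := by ring
  · ext n
    simp only [cart, coeff_mk]
    congr 3
    ring

end ChristolFinite

section ChristolAlg
open PowerSeries

variable (p : ℕ) [Fact p.Prime] {F : Type*} [Field F] [Finite F] [CharP F p]

theorem PB_exists_poly {N : ℕ} {u : PowerSeries F} (hu : PB N u) :
    ∃ Q : Polynomial F, u = (Q : PowerSeries F) := by
  refine ⟨trunc (N + 1) u, ?_⟩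
  ext n
  rw [Polynomial.coeff_coe, coeff_trunc]
  split_ifs with h
  · rfl
  · exact hu n (by omega)

theorem cart_poly (j : ℕ) (Q : Polynomial F) :
    ∃ Q' : Polynomial F, cart p j (Q : PowerSeries F) = (Q' : PowerSeries F) := by
  refine PB_exists_poly (N := Q.natDegree) (PB_cart p (M := Q.natDegree) ?_ j (PB_poly Q))
  have := (Fact.out : p.Prime).pos
  nlinarith

theorem alg_of_closed {K L : Type*} [Field K] [Field L] [Algebra K L] [CharP L p]
    (φ : PowerSeries F →+* L) (t : K) (ht : φ X = algebraMap K L t)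
    (S : Set (PowerSeries F)) (hS : S.Finite) (hc : ∀ u ∈ S, ∀ j < p, cart p j u ∈ S)
    (u : PowerSeries F) (hu : u ∈ S) : IsAlgebraic K (φ u) := by
  classical
  have : ExpChar L p := ExpChar.prime Fact.out
  have hp1 : 1 < p := (Fact.out : p.Prime).one_lt
  let V : ℕ → Submodule K L := fun k => Submodule.span K ((fun v => φ v ^ p ^ k) '' S)
  have hV : ∀ k, V k ≤ V (k + 1) := by
    intro k
    rw [Submodule.span_le]
    rintro _ ⟨v, hv, rfl⟩
    simp only [SetLike.mem_coe]
    rw [cart_decomp p v, map_sum, sum_pow_char_pow]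
    refine Submodule.sum_mem _ fun j hj => ?_
    rw [map_mul, map_pow, map_pow, ht, mul_pow, ← map_pow, ← map_pow, ← Algebra.smul_def,
      ← pow_mul (φ (cart p j v)), ← pow_succ']
    exact Submodule.smul_mem _ _ (Submodule.subset_span
      ⟨_, hc v hv j (Finset.mem_range.1 hj), rfl⟩)
  have hmono : Monotone V := monotone_nat_of_le_succ hV
  have hSf := hS.image (fun v => φ v ^ p ^ (S.ncard))
  have := hSf.fintype
  have hcard : Fintype.card ((fun v => φ v ^ p ^ (S.ncard)) '' S) ≤ S.ncard := by
    rw [← Nat.card_eq_fintype_card]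
    exact Set.ncard_image_le hS
  have hdep : ¬ LinearIndependent K (fun k : Fin (S.ncard + 1) => φ u ^ p ^ (k : ℕ)) := by
    intro hli
    have := linearIndependent_le_span_aux' _ hli ((fun v => φ v ^ p ^ (S.ncard)) '' S) (by
      rintro _ ⟨k, rfl⟩
      exact hmono (Nat.lt_succ_iff.1 k.2) (Submodule.subset_span ⟨u, hu, rfl⟩))
    rw [Fintype.card_fin] at this
    omega
  rw [Fintype.not_linearIndependent_iff] at hdep
  obtain ⟨g, hg, i, hi⟩ := hdep
  refine ⟨∑ k : Fin (S.ncard + 1), Polynomial.monomial (p ^ (k : ℕ)) (g k), ?_, ?_⟩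
  · intro h0
    apply hi
    have := congrArg (fun q => Polynomial.coeff q (p ^ (i : ℕ))) h0
    simp only [Polynomial.finsetSum_coeff, Polynomial.coeff_monomial, Polynomial.coeff_zero] at this
    rw [Finset.sum_eq_single i] at this
    · simpa using this
    · intro b _ hb
      rw [if_neg]
      intro hpow
      exact hb (Fin.ext (Nat.pow_right_injective hp1 hpow))
    · simp
  · rw [map_sum, ← hg]
    refine Finset.sum_congr rfl fun k _ => ?_
    rw [Polynomial.aeval_monomial, Algebra.smul_def]

theorem exists_relation {K L : Type*} [Field K] [Field L] [Algebra K L] (f : L)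
    (hf : IsAlgebraic K f) : ∃ (s : ℕ) (g : Fin s → K),
      ∑ k, g k • f ^ p ^ (k : ℕ) = 0 ∧ ∃ k, g k ≠ 0 := by
  classical
  obtain ⟨w, hw⟩ := (isAlgebraic_iff_isIntegral.1 hf).fg_adjoin_singleton
  have hdep : ¬ LinearIndependent K (fun k : Fin (w.card + 1) => f ^ p ^ (k : ℕ)) := by
    intro hli
    have := linearIndependent_le_span_aux' _ hli (w : Set L) (by
      rintro _ ⟨k, rfl⟩
      rw [hw]
      exact pow_mem (Algebra.self_mem_adjoin_singleton K f) _)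
    simp at this
  rw [Fintype.not_linearIndependent_iff] at hdep
  obtain ⟨g, hg, i, hi⟩ := hdep
  exact ⟨_, g, hg, i, hi⟩

theorem descent {L : Type*} [Field L] [CharP L p] (φ : PowerSeries F →+* L)
    (pth : ∀ y : ℕ → L, ∑ j ∈ Finset.range p, φ X ^ j * y j ^ p = 0 → ∀ j < p, y j = 0)
    (f : L) (s : ℕ) : ∀ (c : ℕ → Polynomial F), (∃ k < s, c k ≠ 0) →
    ∑ k ∈ Finset.range s, φ (c k : PowerSeries F) * f ^ p ^ k = 0 →
    ∃ (s : ℕ) (c : ℕ → Polynomial F), c 0 ≠ 0 ∧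
      φ (c 0 : PowerSeries F) * f +
        ∑ k ∈ Finset.range s, φ (c (k + 1) : PowerSeries F) * f ^ p ^ (k + 1) = 0 := by
  have : ExpChar L p := ExpChar.prime Fact.out
  induction s with
  | zero => rintro c ⟨k, hk, -⟩; omega
  | succ s ih =>
    rintro c ⟨k, hk, hck⟩ hsum
    rw [Finset.sum_range_succ'] at hsum
    by_cases h0 : c 0 = 0
    · rw [h0] at hsum
      simp only [Polynomial.coe_zero, map_zero, zero_mul, add_zero] at hsum
      choose c' hc' using fun j k => cart_poly p j (c (k + 1))
      have key : ∑ j ∈ Finset.range p, φ X ^ j *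
          (∑ k ∈ Finset.range s, φ (c' j k : PowerSeries F) * f ^ p ^ k) ^ p = 0 := by
        rw [← hsum]
        have : ∀ k ∈ Finset.range s, φ (c (k + 1) : PowerSeries F) * f ^ p ^ (k + 1) =
            ∑ j ∈ Finset.range p, φ X ^ j * (φ (c' j k : PowerSeries F) * f ^ p ^ k) ^ p := by
          intro k _
          conv_lhs => rw [cart_decomp p (c (k + 1) : PowerSeries F)]
          rw [map_sum, Finset.sum_mul]
          refine Finset.sum_congr rfl fun j _ => ?_
          rw [hc', map_mul, map_pow, map_pow, mul_pow, ← pow_mul, ← pow_succ, mul_assoc]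
        rw [Finset.sum_congr rfl this, Finset.sum_comm]
        refine Finset.sum_congr rfl fun j _ => ?_
        rw [sum_pow_char, Finset.mul_sum]
      have hz := pth _ key
      obtain ⟨k, rfl⟩ : ∃ k', k = k' + 1 := by
        cases k with
        | zero => exact absurd h0 hck
        | succ k => exact ⟨k, rfl⟩
      have : ∃ j < p, c' j k ≠ 0 := by
        by_contra! hcon
        apply hck
        have e := cart_decomp p (c (k + 1) : PowerSeries F)
        rw [Finset.sum_eq_zero] at e
        · simpa using e
        · intro j hj
          rw [hc', hcon j (Finset.mem_range.1 hj)]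
          simp [(Fact.out : p.Prime).ne_zero]
      obtain ⟨j, hj, hjk⟩ := this
      exact ih (c' j) ⟨k, by omega, hjk⟩ (hz j hj)
    · refine ⟨s, c, h0, ?_⟩
      rw [add_comm]
      simpa using hsum

theorem coords {L : Type*} [Field L] (φ : PowerSeries F →+* L) (ψ : Polynomial F →+* L)
    (hC : ∀ c, φ (PowerSeries.C c) = ψ (Polynomial.C c)) (P : Polynomial F)
    (hX : φ X = ψ P) (d : ℕ) (hd : 0 < d) (hdeg : P.natDegree = d) (n : ℕ) :
    ∀ Q : Polynomial F, Q.natDegree < n → ∃ α : Fin d → Polynomial F,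
      ψ Q = ∑ i : Fin d, ψ Polynomial.X ^ (i : ℕ) * φ (α i : PowerSeries F) := by
  have hP0 : P ≠ 0 := by rintro rfl; simp at hdeg; omega
  induction n with
  | zero => intro Q h; omega
  | succ n ih =>
    intro Q hQ
    have hsmall : ∀ R : Polynomial F, R.natDegree < d →
        ψ R = ∑ i : Fin d, ψ Polynomial.X ^ (i : ℕ) *
          φ ((Polynomial.C (R.coeff i) : Polynomial F) : PowerSeries F) := by
      intro R hR
      conv_lhs => rw [R.as_sum_range' d hR]
      rw [map_sum, Finset.sum_range]
      refine Finset.sum_congr rfl fun i _ => ?_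
      rw [← Polynomial.C_mul_X_pow_eq_monomial, map_mul, map_pow, Polynomial.coe_C, hC, mul_comm]
    have hmod : (Q % P).natDegree < d := by
      rw [← hdeg]; exact Polynomial.natDegree_mod_lt Q (by omega)
    by_cases hQd : Q.natDegree < d
    · exact ⟨_, hsmall Q hQd⟩
    have hdiv : (Q / P).natDegree < n := by
      by_cases h0 : Q / P = 0
      · rw [h0, Polynomial.natDegree_zero]; omega
      · have hQ0 : Q ≠ 0 := by rintro rfl; simp at h0
        have := Polynomial.natDegree_lt_natDegree h0 (Polynomial.degree_div_lt hQ0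
          (Polynomial.natDegree_pos_iff_degree_pos.1 (by omega : 0 < P.natDegree)))
        omega
    obtain ⟨α, hα⟩ := ih _ hdiv
    refine ⟨fun i => Polynomial.X * α i + Polynomial.C ((Q % P).coeff i), ?_⟩
    conv_lhs => rw [← EuclideanDomain.div_add_mod Q P, map_add, map_mul, hα, hsmall _ hmod, ← hX]
    rw [Finset.mul_sum, ← Finset.sum_add_distrib]
    refine Finset.sum_congr rfl fun i _ => ?_
    rw [Polynomial.coe_add, Polynomial.coe_mul, Polynomial.coe_X, map_add, map_mul]
    ring

theorem closed_of_relation {L : Type*} [Field L] [CharP L p] (φ : PowerSeries F →+* L)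
    (ψ : Polynomial F →+* L)
    (hC : ∀ c, φ (PowerSeries.C c) = ψ (Polynomial.C c)) (P : Polynomial F)
    (hX : φ X = ψ P) (d : ℕ) (hd : 0 < d) (hdeg : P.natDegree = d)
    (ind : ∀ u : Fin d → PowerSeries F,
      ∑ i : Fin d, ψ Polynomial.X ^ (i : ℕ) * φ (u i) = 0 → ∀ i, u i = 0)
    (u : Fin d → PowerSeries F) (s : ℕ) (c : ℕ → Polynomial F) (hc : c 0 ≠ 0)
    (f : L) (hf : f = ∑ i : Fin d, ψ Polynomial.X ^ (i : ℕ) * φ (u i))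
    (hrel : φ (c 0 : PowerSeries F) * f +
        ∑ k ∈ Finset.range s, φ (c (k + 1) : PowerSeries F) * f ^ p ^ (k + 1) = 0) (i : Fin d) :
    ∃ S : Set (PowerSeries F), S.Finite ∧ u i ∈ S ∧ ∀ u ∈ S, ∀ j < p, cart p j u ∈ S := by
  have : ExpChar L p := ExpChar.prime Fact.out
  choose α hα using fun (k : ℕ) (j : Fin d) =>
    coords φ ψ hC P hX d hd hdeg _ ((Polynomial.X ^ (j : ℕ)) ^ p ^ (k + 1)) (Nat.lt_succ_self _)
  have hpow : ∀ k, f ^ p ^ (k + 1) = ∑ i : Fin d, ψ Polynomial.X ^ (i : ℕ) *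
      φ (∑ j, (α k j i : PowerSeries F) * u j ^ p ^ (k + 1)) := by
    intro k
    rw [hf, sum_pow_char_pow]
    simp only [map_sum, Finset.mul_sum]
    rw [Finset.sum_comm]
    refine Finset.sum_congr rfl fun j _ => ?_
    have := hα k j
    rw [map_pow, map_pow] at this
    rw [mul_pow, this, Finset.sum_mul]
    refine Finset.sum_congr rfl fun i _ => ?_
    rw [map_mul, map_pow, mul_assoc]
  have hind := ind (fun i => (c 0 : PowerSeries F) * u i + ∑ k ∈ Finset.range s,
      (c (k + 1) : PowerSeries F) * ∑ j, (α k j i : PowerSeries F) * u j ^ p ^ (k + 1)) (by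
    rw [← hrel]
    have h1 : ∀ k ∈ Finset.range s, φ (c (k + 1) : PowerSeries F) * f ^ p ^ (k + 1) =
        ∑ i : Fin d, φ (c (k + 1) : PowerSeries F) * (ψ Polynomial.X ^ (i : ℕ) *
          φ (∑ j, (α k j i : PowerSeries F) * u j ^ p ^ (k + 1))) := by
      intro k _
      rw [hpow, Finset.mul_sum]
    rw [Finset.sum_congr rfl h1, Finset.sum_comm, hf, Finset.mul_sum, ← Finset.sum_add_distrib]
    refine Finset.sum_congr rfl fun i _ => ?_
    rw [map_add, map_mul, map_sum, mul_add, Finset.mul_sum]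
    congr 1
    · ring
    · refine Finset.sum_congr rfl fun k _ => ?_
      rw [map_mul]; ring)
  have smul_eq : ∀ (Q : Polynomial F) (u : PowerSeries F), Q • u = (Q : PowerSeries F) * u := by
    intro Q u; rw [Algebra.smul_def]; rfl
  have := finite_closed p (ι := Fin d × Fin (s + 1)) (fun a => u a.1 ^ p ^ (a.2 : ℕ)) (c 0) hc (by
    rintro ⟨i, ⟨k, hk⟩⟩
    cases k with
    | succ k =>
      apply Submodule.smul_mem
      apply Submodule.subset_span
      refine ⟨(i, ⟨k, by omega⟩), ?_⟩
      simp only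
      rw [← pow_mul, ← pow_succ]
    | zero =>
      simp only [pow_zero, pow_one]
      have h := hind i
      rw [smul_eq, eq_neg_of_add_eq_zero_left h]
      apply Submodule.neg_mem
      refine Submodule.sum_mem _ fun k hk => ?_
      rw [← smul_eq]
      apply Submodule.smul_mem
      refine Submodule.sum_mem _ fun j _ => ?_
      rw [← smul_eq]
      apply Submodule.smul_mem
      apply Submodule.subset_span
      have := Finset.mem_range.1 hk
      refine ⟨(j, ⟨k, by omega⟩), ?_⟩
      simp only
      rw [← pow_mul, ← pow_succ]) (i, 0)
  simpa using this

end ChristolAlg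


open WithZero in
theorem valued_nonarch (L : Type*) [Field L] [Valued L ℤᵐ⁰] : NonarchimedeanRing L := by
  have h := (Valued.v (R := L) (Γ₀ := ℤᵐ⁰)).subgroups_basis.nonarchimedean
  have e := Valued.toUniformSpace_eq L ℤᵐ⁰
  have e2 : (Valued.toUniformSpace (R := L) (Γ₀ := ℤᵐ⁰)).toTopologicalSpace
    = (Valued.v (R := L) (Γ₀ := ℤᵐ⁰)).subgroups_basis.topology := by
    rw [e]; rfl
  rw [e2]
  exact h

open WithZero in
theorem valued_summable {L : Type*} [Field L] [Valued L ℤᵐ⁰] [CompleteSpace L]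
    (κ : ℕ → L) (hκ : ∀ c, Valued.v (κ c) ≤ 1) (t : L) (ht : Valued.v t < 1) :
    Summable (fun n => κ n * t ^ n) := by
  have := valued_nonarch L
  apply NonarchimedeanAddGroup.summable_of_tendsto_cofinite_zero
  rw [Nat.cofinite_eq_atTop]
  have h := Valued.tendsto_zero_pow_of_v_lt_one ht
  rw [(Valued.hasBasis_nhds_zero L ℤᵐ⁰).tendsto_right_iff] at h ⊢
  intro γ _
  filter_upwards [h γ trivial] with n hn
  refine lt_of_le_of_lt ?_ hn
  rw [Valuation.restrict_le_iff, map_mul]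
  exact mul_le_of_le_one_left' (hκ n)

open WithZero in
theorem exists_phi_s16 {F : Type*} [Field F] {L : Type*} [Field L] [Valued L ℤᵐ⁰] [CompleteSpace L]
    [T0Space L] (κ : F →+* L) (hκ : ∀ c, Valued.v (κ c) ≤ 1) (t : L) (ht : Valued.v t < 1) :
    ∃ φ : PowerSeries F →+* L,
      (∀ u, HasSum (fun n => κ (PowerSeries.coeff n u) * t ^ n) (φ u)) ∧
      (∀ u, Valued.v (φ u) ≤ 1) ∧ φ PowerSeries.X = t ∧ ∀ c, φ (PowerSeries.C c) = κ c := by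
  have := valued_nonarch L
  have hs : ∀ u : PowerSeries F, Summable (fun n => κ (PowerSeries.coeff n u) * t ^ n) :=
    fun u => valued_summable _ (fun n => hκ _) t ht
  let f : PowerSeries F → L := fun u => ∑' n, κ (PowerSeries.coeff n u) * t ^ n
  have hf : ∀ u, HasSum (fun n => κ (PowerSeries.coeff n u) * t ^ n) (f u) := fun u => (hs u).hasSum
  have hC : ∀ c, f (PowerSeries.C c) = κ c := by
    intro c
    refine (hf _).unique ?_
    have := hasSum_single (f := fun n => κ (PowerSeries.coeff n (PowerSeries.C c)) * t ^ n) 0 (by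
      intro n hn
      simp [PowerSeries.coeff_C, hn])
    simpa using this
  have hX : f PowerSeries.X = t := by
    refine (hf _).unique ?_
    have := hasSum_single (f := fun n => κ (PowerSeries.coeff n (PowerSeries.X)) * t ^ n) 1 (by
      intro n hn
      simp [PowerSeries.coeff_X, hn])
    simpa using this
  let φ : PowerSeries F →+* L :=
    { toFun := f
      map_one' := by simpa using hC 1
      map_zero' := by simpa using hC 0
      map_add' := by
        intro u w
        refine (hf _).unique ?_
        simpa [add_mul] using (hf u).add (hf w)
      map_mul' := by
        intro u w
        have h1 := (hs u).mul_of_nonarchimedean (hs w)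
        have h2 := (hs u).tsum_mul_tsum_eq_tsum_sum_antidiagonal (hs w) h1
        change f (u * w) = f u * f w
        refine Eq.trans ?_ h2.symm
        refine tsum_congr fun n => ?_
        rw [PowerSeries.coeff_mul, map_sum, Finset.sum_mul]
        refine Finset.sum_congr rfl fun x hx => ?_
        rw [Finset.HasAntidiagonal.mem_antidiagonal] at hx
        rw [map_mul, ← hx, pow_add]; ring }
  refine ⟨φ, hf, ?_, hX, hC⟩
  intro u
  have hcl := Valued.isClosed_integer L (Γ₀ := ℤᵐ⁰)
  refine hcl.mem_of_tendsto (hf u) (Filter.Eventually.of_forall fun s => ?_)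
  refine Subring.sum_mem _ fun n _ => ?_
  rw [Valuation.mem_integer_iff, map_mul, map_pow]
  exact mul_le_one' (hκ _) (pow_le_one' ht.le _)

open WithZero in
theorem phi_ind {F : Type*} [Field F] {L : Type*} [Field L] [Valued L ℤᵐ⁰]
    (φ : PowerSeries F →+* L) (hφ : ∀ u, Valued.v (φ u) ≤ 1)
    (ψ : Polynomial F →+* L) (hC : ∀ c, φ (PowerSeries.C c) = ψ (Polynomial.C c))
    (P : Polynomial F) (hX : φ PowerSeries.X = ψ P) (hP0 : ψ P ≠ 0)
    (hP : ∀ Q, Valued.v (ψ Q) < 1 ↔ P ∣ Q) (hv : ∀ Q, Valued.v (ψ Q) ≤ 1)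
    (d : ℕ) (hd : P.natDegree = d) :
    ∀ u : Fin d → PowerSeries F, ∑ i : Fin d, ψ Polynomial.X ^ (i : ℕ) * φ (u i) = 0 → ∀ i, u i = 0 := by
  have hPne : P ≠ 0 := by rintro rfl; simp at hP0
  have key : ∀ u : Fin d → PowerSeries F, ∑ i : Fin d, ψ Polynomial.X ^ (i : ℕ) * φ (u i) = 0 →
      ∃ w : Fin d → PowerSeries F, (∑ i : Fin d, ψ Polynomial.X ^ (i : ℕ) * φ (w i) = 0) ∧
        ∀ i, u i = PowerSeries.X * w i := by
    intro u hu
    have hdec : ∀ i, ∃ w : PowerSeries F,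
        u i = PowerSeries.X * w + PowerSeries.C (PowerSeries.coeff 0 (u i)) := fun i =>
      ⟨_, by simpa using PowerSeries.eq_X_mul_shift_add_const (u i)⟩
    choose w hw using hdec
    set Q : Polynomial F := ∑ i : Fin d, Polynomial.X ^ (i : ℕ) *
      Polynomial.C (PowerSeries.coeff 0 (u i)) with hQ
    have e : ∑ i : Fin d, ψ Polynomial.X ^ (i : ℕ) * φ (u i) =
        ψ P * (∑ i : Fin d, ψ Polynomial.X ^ (i : ℕ) * φ (w i)) + ψ Q := by
      rw [hQ, map_sum, Finset.mul_sum, ← Finset.sum_add_distrib]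
      refine Finset.sum_congr rfl fun i _ => ?_
      conv_lhs => rw [hw i]
      rw [map_add, map_mul, hX, hC, map_mul, map_pow]; ring
    have hz : Q = 0 := by
      by_contra hne
      have hdvd : P ∣ Q := by
        rw [← hP]
        have : ψ Q = - (ψ P * (∑ i : Fin d, ψ Polynomial.X ^ (i : ℕ) * φ (w i))) := by
          rw [hu] at e; exact eq_neg_of_add_eq_zero_right e.symm
        rw [this, Valuation.map_neg, map_mul]
        refine lt_of_le_of_lt (mul_le_of_le_one_right' ?_) ((hP P).2 dvd_rfl)
        refine Valuation.map_sum_le _ fun i _ => ?_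
        rw [map_mul, map_pow]
        exact mul_le_one' (pow_le_one' (hv _) _) (hφ _)
      have h1 : Q.degree < P.degree := by
        rw [Polynomial.degree_eq_natDegree hPne, hd, hQ]
        refine (Polynomial.degree_sum_le _ _).trans_lt ?_
        rw [Finset.sup_lt_iff (by exact WithBot.bot_lt_coe _)]
        intro i _
        rw [mul_comm]
        refine (Polynomial.degree_C_mul_X_pow_le _ _).trans_lt ?_
        exact_mod_cast i.2
      exact hne (Polynomial.eq_zero_of_dvd_of_degree_lt hdvd h1)
    refine ⟨w, ?_, fun i => ?_⟩
    · rw [e, hz, map_zero, add_zero] at hu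
      exact (mul_eq_zero.1 hu).resolve_left hP0
    · have : Q.coeff i = 0 := by rw [hz]; simp
      rw [hQ, Polynomial.finsetSum_coeff] at this
      simp only [mul_comm (Polynomial.X ^ _), Polynomial.coeff_C_mul_X_pow] at this
      have h2 : PowerSeries.coeff 0 (u i) = 0 := by
        rw [Finset.sum_eq_single i] at this
        · simpa using this
        · intro b _ hb
          rw [if_neg]
          intro h; exact hb (Fin.ext h.symm)
        · simp
      rw [hw i, h2]; simp
  have key2 : ∀ n : ℕ, ∀ u : Fin d → PowerSeries F,
      ∑ i : Fin d, ψ Polynomial.X ^ (i : ℕ) * φ (u i) = 0 → ∀ i, PowerSeries.coeff n (u i) = 0 := by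
    intro n
    induction n with
    | zero =>
      intro u hu i
      obtain ⟨w, _, hw⟩ := key u hu
      rw [hw i]; simp
    | succ n ih =>
      intro u hu i
      obtain ⟨w, h1, hw⟩ := key u hu
      rw [hw i, PowerSeries.coeff_succ_X_mul]
      exact ih w h1 i
  intro u hu i
  ext n
  simpa using key2 n u hu i

open WithZero in
theorem phi_pth {L : Type*} [Field L] [Valued L ℤᵐ⁰] (p : ℕ) (t : L)
    (ht : Valued.v t = exp (-1 : ℤ)) (y : ℕ → L)
    (h : ∑ j ∈ Finset.range p, t ^ j * y j ^ p = 0) : ∀ j < p, y j = 0 := by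
  classical
  by_contra! hc
  obtain ⟨j0, hj0, hy0⟩ := hc
  set S := (Finset.range p).filter (fun j => y j ≠ 0) with hS
  have hne : S.Nonempty := ⟨j0, by simp [hS, hj0, hy0]⟩
  have ht0 : t ≠ 0 := by
    rintro rfl
    rw [map_zero] at ht
    exact exp_ne_zero ht.symm
  have hsum : ∑ j ∈ S, t ^ j * y j ^ p = 0 := by
    rw [← h, hS, Finset.sum_filter_of_ne]
    intro j hj hne hy
    apply hne
    rw [hy, zero_pow (by rw [Finset.mem_range] at hj; omega), mul_zero]
  obtain ⟨k, hk, hmax⟩ := Finset.exists_max_image S (fun j => Valued.v (t ^ j * y j ^ p)) hne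
  have hlog : ∀ j ∈ S, ∃ a : ℤ, Valued.v (t ^ j * y j ^ p) = exp (-(j : ℤ) + p * a) := by
    intro j hj
    have hyj : Valued.v (y j) ≠ 0 := by
      simp only [hS, Finset.mem_filter] at hj
      simpa using hj.2
    refine ⟨log (Valued.v (y j)), ?_⟩
    rw [map_mul, map_pow, map_pow, ht]
    conv_lhs => rw [← exp_log hyj]
    rw [← exp_nsmul, ← exp_nsmul, ← exp_add]
    simp
  have hlt : ∀ j ∈ S \ {k}, Valued.v (t ^ j * y j ^ p) < Valued.v (t ^ k * y k ^ p) := by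
    intro j hj
    rw [Finset.mem_sdiff, Finset.mem_singleton] at hj
    refine lt_of_le_of_ne (hmax j hj.1) fun he => hj.2 ?_
    obtain ⟨a, ha⟩ := hlog j hj.1
    obtain ⟨b, hb⟩ := hlog k hk
    rw [ha, hb, exp_inj] at he
    have hj1 : j < p := by have := hj.1; simp only [hS, Finset.mem_filter, Finset.mem_range] at this; exact this.1
    have hk1 : k < p := by simp only [hS, Finset.mem_filter, Finset.mem_range] at hk; exact hk.1
    have h3 : (p : ℤ) ∣ (j : ℤ) - k := ⟨a - b, by linarith⟩
    have := Int.eq_zero_of_abs_lt_dvd h3 (by rw [abs_lt]; constructor <;> omega)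
    omega
  have := Valuation.map_sum_eq_of_lt (Valued.v (R := L) (Γ₀ := ℤᵐ⁰)) hk hlt
  rw [hsum, map_zero] at this
  obtain ⟨b, hb⟩ := hlog k hk
  rw [hb] at this
  exact exp_ne_zero this.symm


theorem poly_relation (p : ℕ) [Fact p.Prime] {F : Type*} [Field F] {L : Type*} [Field L]
    [Algebra (RatFunc F) L]
    (P : Polynomial F) (hP : 0 < P.natDegree) (f : L) (hf : IsAlgebraic (RatFunc F) f) :
    ∃ (s : ℕ) (c : ℕ → Polynomial F), (∃ k < s, c k ≠ 0) ∧
      ∑ k ∈ Finset.range s, algebraMap (RatFunc F) L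
        (Polynomial.aeval (algebraMap (Polynomial F) (RatFunc F) P) (c k)) * f ^ p ^ k = 0 := by
  classical
  set α : RatFunc F := algebraMap (Polynomial F) (RatFunc F) P with hα
  have hnc : ¬ ∃ c, α = RatFunc.C c := by
    rintro ⟨c, hc⟩
    rw [hα, ← RatFunc.algebraMap_C] at hc
    have := RatFunc.algebraMap_injective F hc
    rw [this] at hP
    simp at hP
  have halg := RatFunc.isAlgebraic_adjoin_simple_X' α hnc
  have hf0 : IsAlgebraic (IntermediateField.adjoin F {α}) f :=
    IsAlgebraic.restrictScalars _ hf
  obtain ⟨s, g, hg, k0, hk0⟩ := exists_relation p f hf0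
  choose r t hrt using fun k => (IntermediateField.mem_adjoin_simple_iff F (g k : RatFunc F)).1 (g k).2
  let t' : Fin s → Polynomial F := fun k => if g k = 0 then 1 else t k
  let r' : Fin s → Polynomial F := fun k => if g k = 0 then 0 else r k
  have ht' : ∀ k, Polynomial.aeval α (t' k) ≠ 0 := by
    intro k
    simp only [t']
    split_ifs with h
    · simp
    · intro h0
      have := hrt k
      rw [h0, div_zero] at this
      exact h (by exact_mod_cast this)
  have hr' : ∀ k, (g k : RatFunc F) * Polynomial.aeval α (t' k) = Polynomial.aeval α (r' k) := by
    intro k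
    have h1 := ht' k
    simp only [t', r'] at h1 ⊢
    split_ifs with h
    · simp [h]
    · rw [if_neg h] at h1
      rw [hrt k, div_mul_cancel₀ _ h1]
  let D : Fin s → Polynomial F := fun k => r' k * ∏ l ∈ Finset.univ.erase k, t' l
  have hD : ∀ k, Polynomial.aeval α (D k) =
      (g k : RatFunc F) * ∏ l, Polynomial.aeval α (t' l) := by
    intro k
    simp only [D]
    rw [map_mul, map_prod, ← hr', ← Finset.mul_prod_erase Finset.univ _ (Finset.mem_univ k)]
    ring
  refine ⟨s, fun k => if h : k < s then D ⟨k, h⟩ else 0, ⟨k0, k0.2, ?_⟩, ?_⟩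
  · simp only [k0.2, dif_pos]
    intro h0
    have := hD k0
    rw [h0, map_zero] at this
    have h2 : ∏ l, Polynomial.aeval α (t' l) ≠ 0 := Finset.prod_ne_zero_iff.2 fun l _ => ht' l
    rcases mul_eq_zero.1 this.symm with h | h
    · exact hk0 (by exact_mod_cast h)
    · exact h2 h
  · rw [← Fin.sum_univ_eq_sum_range (fun k => algebraMap (RatFunc F) L
      (Polynomial.aeval α (if h : k < s then D ⟨k, h⟩ else 0)) * f ^ p ^ k)]
    have h3 : ∀ k : Fin s, algebraMap (RatFunc F) L
      (Polynomial.aeval α (if h : (k : ℕ) < s then D ⟨k, h⟩ else 0)) * f ^ p ^ (k : ℕ)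
      = algebraMap (RatFunc F) L (∏ l, Polynomial.aeval α (t' l)) * (g k • f ^ p ^ (k : ℕ)) := by
      intro k
      rw [dif_pos k.2, hD, map_mul, Algebra.smul_def]
      rw [IsScalarTower.algebraMap_apply (IntermediateField.adjoin F {α}) (RatFunc F) L]
      rw [IntermediateField.algebraMap_apply]
      ring
    rw [Finset.sum_congr rfl (fun k _ => h3 k), ← Finset.mul_sum, hg, mul_zero]

theorem aut_comp {α β : Type*} (k : ℕ) (b : ℕ → α) (τ : α → β) (h : IsKAutomatic k b) :
    IsKAutomatic k (fun n => τ (b n)) := by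
  refine (h.image (fun c n => τ (c n))).subset ?_
  rintro _ ⟨i, j, hj, rfl⟩
  exact ⟨_, ⟨i, j, hj, rfl⟩, rfl⟩

theorem poly_coords {F : Type*} [Field F] (d : ℕ) (Q : Polynomial F) (hQ : Q.degree < (d : ℕ)) :
    Q = ∑ i : Fin d, Polynomial.C (Q.coeff i) * Polynomial.X ^ (i : ℕ) := by
  rw [Fin.sum_univ_eq_sum_range (fun i => Polynomial.C (Q.coeff i) * Polynomial.X ^ i)]
  simp_rw [Polynomial.C_mul_X_pow_eq_monomial]
  rcases eq_or_ne Q 0 with rfl | h0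
  · simp
  · refine Polynomial.as_sum_range' Q d ?_
    rwa [Polynomial.natDegree_lt_iff_degree_lt h0]

theorem aut_of_coords {F : Type*} [Field F] (k d : ℕ) (b : ℕ → Polynomial F)
    (hb : ∀ n, (b n).degree < (d : ℕ)) (h : ∀ i : Fin d, IsKAutomatic k (fun n => (b n).coeff i)) :
    IsKAutomatic k b := by
  have hfin := Set.Finite.pi' h
  refine (hfin.image (fun (f : Fin d → ℕ → F) (n : ℕ) =>
    ∑ i : Fin d, Polynomial.C (f i n) * Polynomial.X ^ (i : ℕ))).subset ?_
  rintro _ ⟨i, j, hj, rfl⟩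
  refine ⟨fun l n => (b (n * k ^ i + j)).coeff l, fun l => ⟨i, j, hj, rfl⟩, ?_⟩
  funext n
  exact (poly_coords d _ (hb _)).symm

section spec
variable {F : Type*} [Field F] (P : Polynomial F) (hP : Irreducible P)

/-- The canonical map as a ring homomorphism. -/
noncomputable def psi : Polynomial F →+* (primeOfIrreducible P hP).adicCompletion (RatFunc F) :=
  (algebraMap (RatFunc F) ((primeOfIrreducible P hP).adicCompletion (RatFunc F))).comp
    (algebraMap (Polynomial F) (RatFunc F))

theorem v_alg (r : RatFunc F) :
    Valued.v (algebraMap (RatFunc F) ((primeOfIrreducible P hP).adicCompletion (RatFunc F)) r) =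
      (primeOfIrreducible P hP).valuation (RatFunc F) r :=
  HeightOneSpectrum.adicCompletion.valued_coe (RatFunc F) (primeOfIrreducible P hP) r

theorem v_psi (Q : Polynomial F) :
    Valued.v (psi P hP Q) = (primeOfIrreducible P hP).intValuation Q := by
  rw [psi, RingHom.comp_apply, v_alg]
  exact HeightOneSpectrum.valuation_of_algebraMap _ _

theorem v_psi_le (Q : Polynomial F) : Valued.v (psi P hP Q) ≤ 1 := by
  rw [v_psi]; exact HeightOneSpectrum.intValuation_le_one _ _

theorem v_psi_lt (Q : Polynomial F) : Valued.v (psi P hP Q) < 1 ↔ P ∣ Q := by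
  rw [v_psi, HeightOneSpectrum.intValuation_lt_one_iff_mem]
  exact Ideal.mem_span_singleton

theorem v_psi_P : Valued.v (psi P hP P) = WithZero.exp (-1 : ℤ) := by
  rw [v_psi]; exact HeightOneSpectrum.intValuation_singleton _ hP.ne_zero rfl

theorem psi_inj_s16 : Function.Injective (psi P hP) :=
  (FaithfulSMul.algebraMap_injective (RatFunc F) _).comp (RatFunc.algebraMap_injective F)

theorem v_lt_one_iff (x : (primeOfIrreducible P hP).adicCompletion (RatFunc F)) :
    Valued.v x ≤ Valued.v (psi P hP P) ↔ Valued.v x < 1 := by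
  rw [v_psi_P, ← WithZero.exp_zero]
  by_cases h : Valued.v x = 0
  · simp [h]
  · rw [← WithZero.exp_log h, WithZero.exp_le_exp, WithZero.exp_lt_exp]
    omega

theorem reps (d : ℕ) (hdeg : P.natDegree = d)
    (x : (primeOfIrreducible P hP).adicCompletion (RatFunc F)) (hx : Valued.v x ≤ 1) :
    ∃! Q : Polynomial F, Q.degree < (d : ℕ) ∧
      Valued.v (x - toAdicCompletion P hP Q) ≤ Valued.v (toAdicCompletion P hP P) := by
  have hdg : P.degree = (d : ℕ) := by rw [Polynomial.degree_eq_natDegree hP.ne_zero, hdeg]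
  have conv : ∀ Q, Valued.v (x - toAdicCompletion P hP Q) ≤ Valued.v (toAdicCompletion P hP P) ↔
      Valued.v (x - psi P hP Q) < 1 := fun Q => v_lt_one_iff P hP _
  simp_rw [conv]
  have hdense : ∃ r : RatFunc F, Valued.v (x - algebraMap (RatFunc F) _ r) < 1 := by
    have hd := HeightOneSpectrum.denseRange_algebraMap (RatFunc F)
      (primeOfIrreducible P hP)
    have hmem : {y | Valued.v (x - y) < 1} ∈ nhds x := by
      rw [Valued.mem_nhds]
      refine ⟨1, fun y hy => ?_⟩
      rw [Set.mem_ofPred_eq] at hy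
      rw [Units.val_one, Valuation.restrict_lt_one_iff] at hy
      rw [Set.mem_ofPred_eq]
      rwa [Valuation.map_sub_swap]
    obtain ⟨y, ⟨r, hr⟩, hy⟩ := hd.inter_nhds_nonempty hmem
    subst hr
    exact ⟨r, hy⟩
  obtain ⟨r, hr⟩ := hdense
  have hr1 : (primeOfIrreducible P hP).valuation (RatFunc F) r ≤ 1 := by
    rw [← v_alg]
    have : algebraMap (RatFunc F) ((primeOfIrreducible P hP).adicCompletion (RatFunc F)) r =
      x - (x - algebraMap (RatFunc F) _ r) := by ring
    rw [this]
    exact (Valuation.map_sub _ _ _).trans (max_le hx hr.le)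
  obtain ⟨A, hA⟩ := HeightOneSpectrum.exists_valuation_sub_lt_of_integer
    (primeOfIrreducible P hP) hr1 1
  rw [← v_alg, Units.val_one, map_sub] at hA
  change Valued.v (psi P hP A - _) < 1 at hA
  have hex : Valued.v (x - psi P hP (A % P)) < 1 := by
    have h1 : Valued.v (psi P hP (A - A % P)) < 1 := by
      rw [v_psi_lt]
      exact ⟨A / P, by rw [sub_eq_iff_eq_add]; exact (EuclideanDomain.div_add_mod A P).symm⟩
    rw [map_sub] at h1
    have e : x - psi P hP (A % P) = (x - algebraMap (RatFunc F) _ r)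
      - (psi P hP A - algebraMap (RatFunc F) _ r) + (psi P hP A - psi P hP (A % P)) := by ring
    rw [e]
    exact Valuation.map_add_lt _ (Valuation.map_sub_lt _ hr hA) h1
  have huniq : ∀ Q R : Polynomial F, Q.degree < (d : ℕ) → R.degree < (d : ℕ) →
      Valued.v (x - psi P hP Q) < 1 → Valued.v (x - psi P hP R) < 1 → Q = R := by
    intro Q R hQ hR h1 h2
    have h3 := Valuation.map_sub_lt _ h2 h1
    rw [sub_sub_sub_cancel_left, ← map_sub, v_psi_lt] at h3
    refine sub_eq_zero.1 (Polynomial.eq_zero_of_dvd_of_degree_lt h3 ?_)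
    rw [hdg]
    exact (Polynomial.degree_sub_le _ _).trans_lt (max_lt hQ hR)
  refine ⟨A % P, ⟨?_, hex⟩, ?_⟩
  · rw [← hdg]; exact Polynomial.degree_mod_lt _ hP.ne_zero
  · rintro Q ⟨hQ, hQ2⟩
    exact huniq _ _ hQ (by rw [← hdg]; exact Polynomial.degree_mod_lt _ hP.ne_zero) hQ2 hex

end spec


theorem main_alg_iff (p : ℕ) [Fact p.Prime] {F : Type*} [Field F] [Finite F] [CharP F p]
    (P : Polynomial F) (hP : Irreducible P) (d : ℕ) (hd : 0 < d) (hdeg : P.natDegree = d)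
    (b : ℕ → Polynomial F) (hb : ∀ n, (b n).degree < (d : ℕ))
    (y : (primeOfIrreducible P hP).adicCompletion (RatFunc F))
    (hy : HasSum (fun n : ℕ => psi P hP (b n) * psi P hP P ^ n) y) :
    IsAlgebraic (RatFunc F) y ↔ IsKAutomatic p b := by
  have hvP := v_psi_P P hP
  have hPlt : Valued.v (psi P hP P) < 1 := (v_psi_lt P hP P).2 dvd_rfl
  have hP0 : psi P hP P ≠ 0 := by
    rw [Ne, map_eq_zero_iff _ (psi_inj_s16 P hP)]; exact hP.ne_zero
  obtain ⟨φ, hφ, hφv, hX, hC⟩ := exists_phi_s16 ((psi P hP).comp Polynomial.C)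
    (fun c => v_psi_le P hP _) (psi P hP P) hPlt
  have hC' : ∀ c, φ (PowerSeries.C c) = psi P hP (Polynomial.C c) := fun c => hC c
  have : CharP (RatFunc F) p := charP_of_injective_algebraMap
    (FaithfulSMul.algebraMap_injective F (RatFunc F)) p
  have : CharP ((primeOfIrreducible P hP).adicCompletion (RatFunc F)) p :=
    charP_of_injective_algebraMap (FaithfulSMul.algebraMap_injective (RatFunc F) _) p
  let u : Fin d → PowerSeries F := fun i => PowerSeries.mk fun n => (b n).coeff i
  have hyu : y = ∑ i : Fin d, psi P hP Polynomial.X ^ (i : ℕ) * φ (u i) := by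
    refine hy.unique ?_
    have := hasSum_sum (s := Finset.univ) (f := fun (i : Fin d) (n : ℕ) =>
      psi P hP Polynomial.X ^ (i : ℕ) *
        (((psi P hP).comp Polynomial.C) (PowerSeries.coeff n (u i)) * psi P hP P ^ n))
      (fun i _ => (hφ (u i)).mul_left _)
    convert! this using 2 with n
    conv_lhs => rw [poly_coords d (b n) (hb n)]
    rw [map_sum, Finset.sum_mul]
    refine Finset.sum_congr rfl fun i _ => ?_
    simp only [u, PowerSeries.coeff_mk, map_mul, map_pow, RingHom.comp_apply]
    ring
  constructor
  · intro halg
    obtain ⟨s, c, hck, hrel⟩ := poly_relation p P (hdeg ▸ hd) y halg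
    have hpoly : ∀ Q : Polynomial F, φ (Q : PowerSeries F) = algebraMap (RatFunc F) _
        (Polynomial.aeval (algebraMap (Polynomial F) (RatFunc F) P) Q) := by
      intro Q
      have : φ.comp Polynomial.coeToPowerSeries.ringHom =
          (algebraMap (RatFunc F) ((primeOfIrreducible P hP).adicCompletion (RatFunc F))).comp
          (Polynomial.aeval (algebraMap (Polynomial F) (RatFunc F) P) :
            Polynomial F →ₐ[F] RatFunc F).toRingHom := by
        apply Polynomial.ringHom_ext
        · intro a
          simp [hC, psi]
        · simp [hX, psi]
      exact congrArg (fun h => h Q) this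
    simp_rw [← hpoly] at hrel
    have pth : ∀ w : ℕ → (primeOfIrreducible P hP).adicCompletion (RatFunc F),
        ∑ j ∈ Finset.range p, φ PowerSeries.X ^ j * w j ^ p = 0 → ∀ j < p, w j = 0 := by
      rw [hX]
      exact phi_pth p _ hvP
    obtain ⟨s', c', hc0, hrel'⟩ := descent p φ pth y s c hck hrel
    have ind := phi_ind φ hφv (psi P hP) hC' P hX hP0 (v_psi_lt P hP) (v_psi_le P hP) d hdeg
    refine aut_of_coords p d b hb fun i => ?_
    obtain ⟨S, hS, hu, hc⟩ := closed_of_relation p φ (psi P hP) hC' P hX d hd hdeg ind u s' c' hc0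
      y hyu hrel' i
    exact aut_of_closed p _ S hS hu hc
  · intro haut
    rw [hyu]
    refine (IsIntegral.sum _ fun i _ => ?_).isAlgebraic
    refine IsAlgebraic.isIntegral ?_
    refine IsAlgebraic.mul (IsAlgebraic.pow (isAlgebraic_algebraMap _) _) ?_
    obtain ⟨S, hS, hu, hc⟩ := closed_of_aut p (fun n => (b n).coeff i)
      (aut_comp p b (fun Q => Q.coeff i) haut)
    exact alg_of_closed p φ (algebraMap (Polynomial F) (RatFunc F) P) hX S hS hc _ hu


/-- Let `P(z) ∈ 𝔽_q[z]` be irreducible of degree `d > 0` and let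
`Γ = {c₀ + c₁ z + ⋯ + c_{d-1} z^{d-1} : cᵢ ∈ 𝔽_q}` be the polynomials of degree
less than `d`.  Then `Γ` is a complete set of representatives modulo `P(z)` in
the `P`-adic completion `K_v` of `𝔽_q(z)`, and for every `x ∈ K_v` with
expansion `x = ∑_{n ≥ m} a_n P(z)ⁿ`, `a_n ∈ Γ`, the element `x` is algebraic
over `𝔽_q(z)` if and only if `{a_n}_{n ≥ m}` is `p`-automatic. -/
theorem adic_expansion_algebraic_iff_automatic
    (p : ℕ) [Fact p.Prime] (F : Type*) [Field F] [Fintype F] [CharP F p]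
    (P : Polynomial F) (hP : Irreducible P) (d : ℕ) (hd : 0 < d)
    (hdeg : P.natDegree = d) :
    (∀ x : (primeOfIrreducible P hP).adicCompletion (RatFunc F),
      Valued.v x ≤ 1 →
        ∃! Q : Polynomial F, Q.degree < (d : ℕ) ∧
          Valued.v (x - toAdicCompletion P hP Q) ≤ Valued.v (toAdicCompletion P hP P)) ∧
    (∀ (x : (primeOfIrreducible P hP).adicCompletion (RatFunc F))
        (m : ℤ) (a : ℤ → Polynomial F),
      (∀ n : ℤ, m ≤ n → (a n).degree < (d : ℕ)) →
      HasSum (fun n : ℕ =>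
        toAdicCompletion P hP (a (m + n)) * toAdicCompletion P hP P ^ (m + (n : ℤ))) x →
      (IsAlgebraic (RatFunc F) x ↔ IsKAutomatic p fun n : ℕ => a (m + n))) := by
  refine ⟨fun x hx => reps P hP d hdeg x hx, ?_⟩
  intro x m a ha hsum
  set t := psi P hP P with ht
  have hP0 : t ≠ 0 := by
    rw [ht, Ne, map_eq_zero_iff _ (psi_inj_s16 P hP)]; exact hP.ne_zero
  have hy : HasSum (fun n : ℕ => psi P hP (a (m + n)) * psi P hP P ^ n) (x * t ^ (-m)) := by
    convert! hsum.mul_right (t ^ (-m)) using 2 with n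
    change psi P hP (a (m + n)) * t ^ n = psi P hP (a (m + n)) * t ^ (m + (n : ℤ)) * t ^ (-m)
    rw [mul_assoc, ← zpow_add₀ hP0]
    congr 1
    rw [← zpow_natCast]
    congr 1
    ring
  rw [← main_alg_iff p P hP d hd hdeg (fun n : ℕ => a (m + n)) (fun n => ha _ (by omega)) _ hy]
  have htalg : ∀ k : ℤ, IsAlgebraic (RatFunc F) (t ^ k) := by
    intro k
    have : t ^ k = algebraMap (RatFunc F) _ ((algebraMap (Polynomial F) (RatFunc F) P) ^ k) := by
      rw [map_zpow₀]; rfl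
    rw [this]
    exact isAlgebraic_algebraMap _
  constructor
  · intro h
    exact h.mul (htalg _)
  · intro h
    have := h.mul (htalg m)
    rwa [mul_assoc, ← zpow_add₀ hP0, neg_add_cancel, zpow_zero, mul_one] at this
end
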